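/- For every g ≥ 5, the block-inclusion homomorphism Sp^q_{2g}(ℤ) → Sp^q_{2(g+1)}(ℤ), given by extending a matrix by the identity on one additional symplectic basis pair, induces an isomorphism on abelianisations. -/

import Mathlib

open Matrix

/-- Index type for `2g × 2g` matrices: the first `g` indices correspond to the
basis vectors `e₁, …, e_g` and the last `g` to `f₁, …, f_g`. -/
abbrev HypIdx (g : ℕ) := Fin g ⊕ Fin g

/-- Gram matrix of the orthogonal sum of `g` hyperbolic planes. -/
def Qmat (g : ℕ) : Matrix (HypIdx g) (HypIdx g) ℤ := Matrix.fromBlocks 0 1 1 0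

/-- The standard symplectic form matrix. -/
def Jmat (g : ℕ) : Matrix (HypIdx g) (HypIdx g) ℤ := Matrix.fromBlocks 0 1 (-1) 0

/-- The subgroup of `GL_{2g}(ℤ)` of matrices `A` with `Aᵀ * Q * A = Q`. -/
def formGroup (g : ℕ) (Q : Matrix (HypIdx g) (HypIdx g) ℤ) :
    Subgroup (GL (HypIdx g) ℤ) where
  carrier := {A | A.valᵀ * Q * A.val = Q}
  one_mem' := by simp
  mul_mem' := by
    intro A B hA hB
    have hA' : A.valᵀ * Q * A.val = Q := hA
    have hB' : B.valᵀ * Q * B.val = Q := hB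
    show (A * B).valᵀ * Q * (A * B).val = Q
    rw [Units.val_mul, transpose_mul]
    calc B.valᵀ * A.valᵀ * Q * (A.val * B.val)
        = B.valᵀ * (A.valᵀ * Q * A.val) * B.val := by noncomm_ring
      _ = B.valᵀ * Q * B.val := by rw [hA']
      _ = Q := hB'
  inv_mem' := by
    intro A hA
    have hA' : A.valᵀ * Q * A.val = Q := hA
    show (A⁻¹).valᵀ * Q * (A⁻¹).val = Q
    have h1 : A.val * (A⁻¹).val = 1 := by
      rw [← Units.val_mul, mul_inv_cancel, Units.val_one]
    calc (A⁻¹).valᵀ * Q * (A⁻¹).val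
        = (A⁻¹).valᵀ * (A.valᵀ * Q * A.val) * (A⁻¹).val := by rw [hA']
      _ = (A.val * (A⁻¹).val)ᵀ * Q * (A.val * (A⁻¹).val) := by
          rw [transpose_mul]; noncomm_ring
      _ = Q := by rw [h1]; simp

/-- `O_{g,g}(ℤ)`. -/
def Ogg (g : ℕ) : Subgroup (GL (HypIdx g) ℤ) := formGroup g (Qmat g)

/-- `Sp_{2g}(ℤ)`. -/
def Sp (g : ℕ) : Subgroup (GL (HypIdx g) ℤ) := formGroup g (Jmat g)

/-- The standard quadratic refinement `q(x, y) = Σᵢ xᵢ yᵢ mod 2`. -/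
def qform (g : ℕ) (v : HypIdx g → ℤ) : ZMod 2 :=
  ∑ i : Fin g, ((v (Sum.inl i) * v (Sum.inr i) : ℤ) : ZMod 2)

/-- The subgroup of `GL_{2g}(ℤ)` preserving the quadratic refinement `q`. -/
def qPreserving (g : ℕ) : Subgroup (GL (HypIdx g) ℤ) where
  carrier := {A | ∀ v : HypIdx g → ℤ, qform g (A.val.mulVec v) = qform g v}
  one_mem' := by intro v; simp
  mul_mem' := by
    intro A B hA hB v
    show qform g ((A * B).val.mulVec v) = qform g v
    rw [Units.val_mul, ← Matrix.mulVec_mulVec, hA, hB]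
  inv_mem' := by
    intro A hA v
    have h1 : A.val.mulVec ((A⁻¹).val.mulVec v) = v := by
      rw [Matrix.mulVec_mulVec, ← Units.val_mul, mul_inv_cancel, Units.val_one,
        Matrix.one_mulVec]
    calc qform g ((A⁻¹).val.mulVec v)
        = qform g (A.val.mulVec ((A⁻¹).val.mulVec v)) := (hA _).symm
      _ = qform g v := by rw [h1]

/-- `Sp^q_{2g}(ℤ)`: symplectic matrices preserving the quadratic refinement. -/
def Spq (g : ℕ) : Subgroup (GL (HypIdx g) ℤ) := Sp g ⊓ qPreserving g
/-- Extension of a `2g × 2g` matrix to a `2(g+1) × 2(g+1)` matrix, acting as the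
original matrix on the first `g` hyperbolic/symplectic basis pairs and as the
identity on the additional pair. -/
def extendMat {g : ℕ} (A : Matrix (HypIdx g) (HypIdx g) ℤ) :
    Matrix (HypIdx (g + 1)) (HypIdx (g + 1)) ℤ := fun i j =>
  match i, j with
  | Sum.inl a, Sum.inl b =>
      if h : a.val < g ∧ b.val < g then A (Sum.inl ⟨a.val, h.1⟩) (Sum.inl ⟨b.val, h.2⟩)
      else if a = b then 1 else 0
  | Sum.inl a, Sum.inr b =>
      if h : a.val < g ∧ b.val < g then A (Sum.inl ⟨a.val, h.1⟩) (Sum.inr ⟨b.val, h.2⟩) else 0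
  | Sum.inr a, Sum.inl b =>
      if h : a.val < g ∧ b.val < g then A (Sum.inr ⟨a.val, h.1⟩) (Sum.inl ⟨b.val, h.2⟩) else 0
  | Sum.inr a, Sum.inr b =>
      if h : a.val < g ∧ b.val < g then A (Sum.inr ⟨a.val, h.1⟩) (Sum.inr ⟨b.val, h.2⟩)
      else if a = b then 1 else 0


section part1
open Sum

/-- the symplectic pairing -/
def om {g : ℕ} {R : Type*} [CommRing R] (w w' : HypIdx g → R) : R :=
  ∑ i : Fin g, (w (inl i) * w' (inr i) - w (inr i) * w' (inl i))

variable {g : ℕ} {R : Type*} [CommRing R]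

lemma om_add_left (a b c : HypIdx g → R) : om (a + b) c = om a c + om b c := by
  simp only [om, ← Finset.sum_add_distrib, Pi.add_apply]
  exact Finset.sum_congr rfl fun i _ => by ring

lemma om_add_right (a b c : HypIdx g → R) : om a (b + c) = om a b + om a c := by
  simp only [om, ← Finset.sum_add_distrib, Pi.add_apply]
  exact Finset.sum_congr rfl fun i _ => by ring

lemma om_smul_left (r : R) (a b : HypIdx g → R) : om (r • a) b = r * om a b := by
  simp only [om, Finset.mul_sum, Pi.smul_apply, smul_eq_mul]
  exact Finset.sum_congr rfl fun i _ => by ring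

lemma om_smul_right (r : R) (a b : HypIdx g → R) : om a (r • b) = r * om a b := by
  simp only [om, Finset.mul_sum, Pi.smul_apply, smul_eq_mul]
  exact Finset.sum_congr rfl fun i _ => by ring

lemma om_swap (a b : HypIdx g → R) : om a b = - om b a := by
  simp only [om, ← Finset.sum_neg_distrib]
  exact Finset.sum_congr rfl fun i _ => by ring

lemma om_self (a : HypIdx g → R) : om a a = 0 := by
  simp only [om]
  exact Finset.sum_eq_zero fun i _ => by ring

lemma om_neg_left (a b : HypIdx g → R) : om (-a) b = - om a b := by
  rw [← neg_one_smul R a, om_smul_left]; ring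

lemma om_neg_right (a b : HypIdx g → R) : om a (-b) = - om a b := by
  rw [← neg_one_smul R b, om_smul_right]; ring

lemma om_eq_dot (a b : HypIdx g → R) :
    om a b = a ⬝ᵥ (((Jmat g).map (Int.cast : ℤ → R)) *ᵥ b) := by
  have : ((Jmat g).map (Int.cast : ℤ → R)) = Matrix.fromBlocks 0 1 (-1) 0 := by
    rw [Jmat, Matrix.fromBlocks_map]
    congr 1 <;> ext i j <;> simp [Matrix.one_apply, apply_ite (Int.cast : ℤ → R)]
  rw [this, Matrix.fromBlocks_mulVec]
  simp only [om, dotProduct, Fintype.sum_sum_type, Finset.sum_sub_distrib]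
  simp [Matrix.neg_mulVec, sub_eq_add_neg]

lemma om_map_of_Sp {A : Matrix (HypIdx g) (HypIdx g) ℤ} (hA : Aᵀ * Jmat g * A = Jmat g)
    (a b : HypIdx g → R) :
    om (A.map (Int.cast : ℤ → R) *ᵥ a) (A.map (Int.cast : ℤ → R) *ᵥ b) = om a b := by
  have h := congrArg (fun M => M.map (Int.castRingHom R)) hA
  simp only [Matrix.map_mul] at h
  have h' : (A.map (Int.cast : ℤ → R))ᵀ * ((Jmat g).map (Int.cast : ℤ → R)) *
    (A.map (Int.cast : ℤ → R)) = (Jmat g).map (Int.cast : ℤ → R) := h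
  simp only [om_eq_dot]
  conv_rhs => rw [← h', ← Matrix.mulVec_mulVec, ← Matrix.mulVec_mulVec,
    Matrix.dotProduct_mulVec a, Matrix.vecMul_transpose]

end part1

section part2
open Sum
variable {g : ℕ}

lemma om_map_Z {A : Matrix (HypIdx g) (HypIdx g) ℤ} (hA : Aᵀ * Jmat g * A = Jmat g)
    (a b : HypIdx g → ℤ) : om (A *ᵥ a) (A *ᵥ b) = om a b := by
  have := om_map_of_Sp hA a b
  have h : A.map (Int.cast : ℤ → ℤ) = A := by ext i j; simp
  rwa [h] at this

lemma Sp_of_om {A : Matrix (HypIdx g) (HypIdx g) ℤ}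
    (h : ∀ a b : HypIdx g → ℤ, om (A *ᵥ a) (A *ᵥ b) = om a b) :
    Aᵀ * Jmat g * A = Jmat g := by
  have hJ : (Jmat g).map (Int.cast : ℤ → ℤ) = Jmat g := by ext i j; simp
  ext i j
  have := h (Pi.single i 1) (Pi.single j 1)
  rw [om_eq_dot, om_eq_dot, hJ] at this
  have e : A *ᵥ (Pi.single i 1) ⬝ᵥ Jmat g *ᵥ A *ᵥ (Pi.single j 1) =
      (Pi.single i 1) ⬝ᵥ (Aᵀ * Jmat g * A) *ᵥ (Pi.single j 1) := by
    rw [← Matrix.mulVec_mulVec, ← Matrix.mulVec_mulVec,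
      Matrix.dotProduct_mulVec (Pi.single i 1), Matrix.vecMul_transpose]
  rw [e] at this
  simpa using this

lemma qform_add (a b : HypIdx g → ℤ) :
    qform g (a + b) = qform g a + qform g b + ((om a b : ℤ) : ZMod 2) := by
  simp only [qform, om, Int.cast_sum, ← Finset.sum_add_distrib, Pi.add_apply]
  refine Finset.sum_congr rfl fun i _ => ?_
  push_cast
  have : ∀ x y z w : ZMod 2, (x + y) * (z + w) = x * z + y * w + (x * w - z * y) := by decide
  apply this

lemma qform_smul (r : ℤ) (a : HypIdx g → ℤ) :
    qform g (r • a) = (r : ZMod 2) * qform g a := by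
  simp only [qform, Finset.mul_sum, Pi.smul_apply, smul_eq_mul]
  refine Finset.sum_congr rfl fun i _ => ?_
  push_cast
  have : ∀ x y z : ZMod 2, x * y * (x * z) = x * (y * z) := by decide
  apply this

/-- action on vectors -/
def act (A : Spq g) (w : HypIdx g → ℤ) : HypIdx g → ℤ := A.val.val *ᵥ w

lemma act_mul (A B : Spq g) (w : HypIdx g → ℤ) : act (A * B) w = act A (act B w) := by
  simp [act, Matrix.mulVec_mulVec]
lemma act_one (w : HypIdx g → ℤ) : act (1 : Spq g) w = w := by simp [act]
lemma act_inv_act (A : Spq g) (w : HypIdx g → ℤ) : act A⁻¹ (act A w) = w := by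
  rw [← act_mul, inv_mul_cancel, act_one]
lemma act_act_inv (A : Spq g) (w : HypIdx g → ℤ) : act A (act A⁻¹ w) = w := by
  rw [← act_mul, mul_inv_cancel, act_one]
lemma act_add (A : Spq g) (w w' : HypIdx g → ℤ) : act A (w + w') = act A w + act A w' :=
  Matrix.mulVec_add _ _ _
lemma act_smul (A : Spq g) (r : ℤ) (w : HypIdx g → ℤ) : act A (r • w) = r • act A w :=
  Matrix.mulVec_smul _ _ _
lemma act_sum {ι : Type*} (A : Spq g) (s : Finset ι) (f : ι → HypIdx g → ℤ) :
    act A (∑ i ∈ s, f i) = ∑ i ∈ s, act A (f i) :=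
  Matrix.mulVec_sum _ _ _
lemma om_act (A : Spq g) (w w' : HypIdx g → ℤ) : om (act A w) (act A w') = om w w' :=
  om_map_Z A.2.1 _ _
lemma qform_act (A : Spq g) (w : HypIdx g → ℤ) : qform g (act A w) = qform g w := A.2.2 w
lemma act_ext {A B : Spq g} (h : ∀ w, act A w = act B w) : A = B := by
  apply Subtype.ext; apply Units.ext
  ext i j
  have := congrFun (h (Pi.single j 1)) i
  simpa [act] using this

abbrev bv (p : HypIdx g) : HypIdx g → ℤ := Pi.single p 1

lemma vec_eq_sum (w : HypIdx g → ℤ) : w = ∑ p, w p • bv p := by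
  ext q
  simp [Finset.sum_apply, bv, Pi.single_apply]

lemma act_ext_bv {A B : Spq g} (h : ∀ p, act A (bv p) = act B (bv p)) : A = B := by
  apply act_ext; intro w
  rw [vec_eq_sum w, act_sum, act_sum]
  simp only [act_smul, h]

/-- build an element from linear maps -/
def mkS (f f' : (HypIdx g → ℤ) →ₗ[ℤ] (HypIdx g → ℤ)) (h1 : ∀ w, f (f' w) = w)
    (h2 : ∀ w, f' (f w) = w) (ho : ∀ w w', om (f w) (f w') = om w w')
    (hq : ∀ w, qform g (f w) = qform g w) : Spq g :=
  ⟨⟨LinearMap.toMatrix' f, LinearMap.toMatrix' f', by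
      rw [← LinearMap.toMatrix'_comp, ← LinearMap.toMatrix'_id]; congr 1
      exact LinearMap.ext h1, by
      rw [← LinearMap.toMatrix'_comp, ← LinearMap.toMatrix'_id]; congr 1
      exact LinearMap.ext h2⟩, by
    constructor
    · apply Sp_of_om
      intro a b
      show om (LinearMap.toMatrix' f *ᵥ a) (LinearMap.toMatrix' f *ᵥ b) = _
      rw [LinearMap.toMatrix'_mulVec, LinearMap.toMatrix'_mulVec, ho]
    · intro v
      show qform g (LinearMap.toMatrix' f *ᵥ v) = _
      rw [LinearMap.toMatrix'_mulVec, hq]⟩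

lemma act_mkS (f f' : (HypIdx g → ℤ) →ₗ[ℤ] (HypIdx g → ℤ)) (h1 h2 ho hq) (w) :
    act (mkS f f' h1 h2 ho hq) w = f w := by
  show LinearMap.toMatrix' f *ᵥ w = _
  rw [LinearMap.toMatrix'_mulVec]

/-- Eichler map -/
def El (u v : HypIdx g → ℤ) : (HypIdx g → ℤ) →ₗ[ℤ] (HypIdx g → ℤ) where
  toFun w := w + om w u • v + om w v • u
  map_add' a b := by simp only [om_add_left, add_smul]; abel
  map_smul' r a := by
    simp only [om_smul_left, smul_add, smul_smul, RingHom.id_apply]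

lemma El_apply (u v w : HypIdx g → ℤ) : El u v w = w + om w u • v + om w v • u := rfl

lemma El_comp (u v v' w : HypIdx g → ℤ) (h : om u v = 0) (h' : om u v' = 0) (h2 : om v v' = 0) :
    El u v' (El u v w) = El u (v + v') w := by
  have h3 : om v u = 0 := by rw [om_swap, h, neg_zero]
  have h4 : om v' u = 0 := by rw [om_swap, h', neg_zero]
  simp only [El_apply, om_add_left, om_add_right, om_smul_left, om_self, h, h', h2, h3,
    mul_zero, add_zero, add_smul, smul_add]
  abel

lemma El_zero (u w : HypIdx g → ℤ) : El u 0 w = w := by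
  have : om w (0 : HypIdx g → ℤ) = 0 := by simp [om]
  simp [El_apply, this]

/-- Eichler element -/
def E (u v : HypIdx g → ℤ) (h : om u v = 0) (hu : qform g u = 0) (hv : qform g v = 0) : Spq g :=
  mkS (El u v) (El u (-v))
    (fun w => by
      rw [El_comp u (-v) v w (by rw [om_neg_right, h, neg_zero]) h (by rw [om_neg_left, om_self, neg_zero])]
      rw [neg_add_cancel, El_zero])
    (fun w => by
      rw [El_comp u v (-v) w h (by rw [om_neg_right, h, neg_zero]) (by rw [om_neg_right, om_self, neg_zero])]
      rw [add_neg_cancel, El_zero])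
    (fun w w' => by
      have h3 : om v u = 0 := by rw [om_swap, h, neg_zero]
      simp only [El_apply, om_add_left, om_add_right, om_smul_left, om_smul_right, om_self, h, h3]
      rw [om_swap v w', om_swap u w']
      ring)
    (fun w => by
      have h3 : om v u = 0 := by rw [om_swap, h, neg_zero]
      simp only [El_apply, qform_add, qform_smul, hu, hv, om_add_left, om_add_right, om_smul_left, om_smul_right, om_self, h, h3]
      push_cast
      have : ∀ a x y : ZMod 2, a + x * 0 + x * y + y * 0 + y * (x + x * 0) = a := by decide
      apply this)

lemma act_E (u v : HypIdx g → ℤ) (h hu hv) (w : HypIdx g → ℤ) :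
    act (E u v h hu hv) w = w + om w u • v + om w v • u := act_mkS _ _ _ _ _ _ _

lemma conj_E (A : Spq g) (u v : HypIdx g → ℤ) (h hu hv) :
    A * E u v h hu hv * A⁻¹ = E (act A u) (act A v) (by rw [om_act, h]) (by rw [qform_act, hu])
      (by rw [qform_act, hv]) := by
  apply act_ext; intro w
  obtain ⟨w, rfl⟩ : ∃ w', w = act A w' := ⟨act A⁻¹ w, (act_act_inv A w).symm⟩
  rw [act_mul, act_inv_act, act_mul, act_E, act_E, om_act, om_act, act_add, act_add, act_smul,
    act_smul]

lemma E_mul (u v v' : HypIdx g → ℤ) (h hu hv) (h' hv') (h2 : om v v' = 0) (h3 hv3) :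
    E u v' h' hu hv' * E u v h hu hv = E u (v + v') h3 hu hv3 := by
  apply act_ext; intro w
  rw [act_mul, act_E, act_E, act_E]
  exact El_comp u v v' w h h' h2

end part2

section part3
open Sum
variable {g : ℕ}

/-- pair index -/
def ix (p : HypIdx g) : Fin g := Sum.elim id id p
/-- sign -/
def sg (p : HypIdx g) : ℤ := Sum.elim (fun _ => -1) (fun _ => 1) p

@[simp] lemma ix_inl (i : Fin g) : ix (inl i : HypIdx g) = i := rfl
@[simp] lemma ix_inr (i : Fin g) : ix (inr i : HypIdx g) = i := rfl
@[simp] lemma sg_inl (i : Fin g) : sg (inl i : HypIdx g) = -1 := rfl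
@[simp] lemma sg_inr (i : Fin g) : sg (inr i : HypIdx g) = 1 := rfl
@[simp] lemma ix_swap (p : HypIdx g) : ix p.swap = ix p := by cases p <;> rfl
lemma sg_sq (p : HypIdx g) : sg p * sg p = 1 := by cases p <;> simp
lemma swap_ne (p : HypIdx g) : p.swap ≠ p := by cases p <;> simp
lemma ix_eq_iff (p q : HypIdx g) : ix p = ix q ↔ p = q ∨ p = q.swap := by
  cases p <;> cases q <;> simp [ix]

lemma om_bv (w : HypIdx g → ℤ) (p : HypIdx g) : om w (bv p) = sg p * w p.swap := by
  cases p <;> simp [om, bv, Pi.single_apply]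

lemma om_bv_bv (p q : HypIdx g) (h : q ≠ p.swap) : om (bv p) (bv q) = 0 := by
  rw [om_bv, bv, Pi.single_apply, if_neg, mul_zero]
  rintro h2; apply h; rw [← h2, Sum.swap_swap]

lemma q_bv (p : HypIdx g) : qform g (bv p) = 0 := by
  cases p <;> simp [qform, bv, Pi.single_apply]

lemma q_smul_bv (c : ℤ) (p : HypIdx g) : qform g (c • bv p) = 0 := by
  rw [qform_smul, q_bv, mul_zero]

/-- elementary generator -/
def Eb (p q : HypIdx g) (h : q ≠ p.swap) (c : ℤ) : Spq g :=
  E (bv p) (c • bv q) (by rw [om_smul_right, om_bv_bv p q h, mul_zero]) (q_bv p) (q_smul_bv c q)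

lemma act_Eb (p q : HypIdx g) (h : q ≠ p.swap) (c : ℤ) (w : HypIdx g → ℤ) (r : HypIdx g) :
    act (Eb p q h c) w r = w r + (if r = q then c * sg p * w p.swap else 0)
      + (if r = p then c * sg q * w q.swap else 0) := by
  rw [Eb, act_E]
  simp only [om_smul_right, om_bv, Pi.add_apply, Pi.smul_apply, bv, Pi.single_apply, smul_eq_mul]
  split_ifs <;> ring

/-- the rotation in the k-th pair -/
def Jl (k : Fin g) (s : ℤ) : (HypIdx g → ℤ) →ₗ[ℤ] (HypIdx g → ℤ) where
  toFun w := Sum.elim (fun i => if i = k then -s * w (inr i) else w (inl i))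
    (fun i => if i = k then s * w (inl i) else w (inr i))
  map_add' a b := by
    ext p; cases p <;> simp <;> split_ifs <;> ring
  map_smul' r a := by
    ext p; cases p <;> simp <;> split_ifs <;> ring

lemma Jl_inl (k : Fin g) (s : ℤ) (w : HypIdx g → ℤ) (i : Fin g) :
    Jl k s w (inl i) = if i = k then -s * w (inr i) else w (inl i) := rfl
lemma Jl_inr (k : Fin g) (s : ℤ) (w : HypIdx g → ℤ) (i : Fin g) :
    Jl k s w (inr i) = if i = k then s * w (inl i) else w (inr i) := rfl

def Jk (k : Fin g) : Spq g :=
  mkS (Jl k 1) (Jl k (-1))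
    (fun w => by ext p; cases p <;> simp [Jl_inl, Jl_inr] <;> split_ifs <;> simp)
    (fun w => by ext p; cases p <;> simp [Jl_inl, Jl_inr] <;> split_ifs <;> simp)
    (fun w w' => by
      simp only [om, Jl_inl, Jl_inr]
      refine Finset.sum_congr rfl fun i _ => ?_
      split_ifs <;> ring)
    (fun w => by
      simp only [qform, Jl_inl, Jl_inr]
      refine Finset.sum_congr rfl fun i _ => ?_
      split_ifs
      · push_cast
        have : ∀ a b : ZMod 2, -1 * a * (1 * b) = b * a := by decide
        apply this
      · rfl)

lemma act_Jk_inl (k : Fin g) (w : HypIdx g → ℤ) (i : Fin g) :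
    act (Jk k) w (inl i) = if i = k then - w (inr i) else w (inl i) := by
  rw [Jk, act_mkS, Jl_inl]; simp
lemma act_Jk_inr (k : Fin g) (w : HypIdx g → ℤ) (i : Fin g) :
    act (Jk k) w (inr i) = if i = k then w (inl i) else w (inr i) := by
  rw [Jk, act_mkS, Jl_inr]; simp

/-- generated subgroup on an index set -/
def NS (S : Finset (Fin g)) : Subgroup (Spq g) :=
  Subgroup.closure ({A | ∃ p q, ∃ h : q ≠ p.swap, ∃ c, ix p ∈ S ∧ ix q ∈ S ∧ A = Eb p q h c} ∪
    {A | ∃ k ∈ S, A = Jk k})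

lemma Eb_mem {S : Finset (Fin g)} {p q : HypIdx g} (h : q ≠ p.swap) (c : ℤ) (hp : ix p ∈ S)
    (hq : ix q ∈ S) : Eb p q h c ∈ NS S :=
  Subgroup.subset_closure (Or.inl ⟨p, q, h, c, hp, hq, rfl⟩)
lemma Jk_mem {S : Finset (Fin g)} {k : Fin g} (h : k ∈ S) : Jk k ∈ NS S :=
  Subgroup.subset_closure (Or.inr ⟨k, h, rfl⟩)

lemma NS_mono {S T : Finset (Fin g)} (h : S ⊆ T) : NS S ≤ NS T := by
  apply Subgroup.closure_mono
  rintro A (⟨p, q, hh, c, hp, hq, rfl⟩ | ⟨k, hk, rfl⟩)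
  · exact Or.inl ⟨p, q, hh, c, h hp, h hq, rfl⟩
  · exact Or.inr ⟨k, h hk, rfl⟩

lemma bv_apply (p r : HypIdx g) : bv p r = if r = p then 1 else 0 := by
  simp [bv, Pi.single_apply]

lemma NS_fix {S : Finset (Fin g)} {A : Spq g} (hA : A ∈ NS S) (r : HypIdx g) (hr : ix r ∉ S) :
    act A (bv r) = bv r := by
  induction hA using Subgroup.closure_induction with
  | mem A h =>
    rcases h with (⟨p, q, hh, c, hp, hq, rfl⟩ | ⟨k, hk, rfl⟩)
    · ext t
      rw [act_Eb]
      have h1 : p.swap ≠ r := by rintro rfl; simp at hr; exact hr hp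
      have h2 : q.swap ≠ r := by rintro rfl; simp at hr; exact hr hq
      simp [bv_apply, h1, h2]
    · have h0 : ix r ≠ k := by rintro rfl; exact hr hk
      ext t
      rcases t with i | i
      · rw [act_Jk_inl]; split_ifs with h
        · have h1 : (inr i : HypIdx g) ≠ r := by rintro rfl; exact h0 h
          have h2 : (inl i : HypIdx g) ≠ r := by rintro rfl; exact h0 h
          simp [bv_apply, h1, h2]
        · rfl
      · rw [act_Jk_inr]; split_ifs with h
        · have h1 : (inr i : HypIdx g) ≠ r := by rintro rfl; exact h0 h
          have h2 : (inl i : HypIdx g) ≠ r := by rintro rfl; exact h0 h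
          simp [bv_apply, h1, h2]
        · rfl
  | one => exact act_one _
  | mul x y _ _ hx hy => rw [act_mul, hy, hx]
  | inv x _ hx => rw [← hx, act_inv_act, hx]

lemma zero_out {S : Finset (Fin g)} {A : Spq g}
    (hA : ∀ p : HypIdx g, ix p ∉ S → act A (bv p) = bv p) (a p : HypIdx g) (ha : ix a ∈ S)
    (hp : ix p ∉ S) : act A (bv a) p = 0 := by
  have h1 := om_act A (bv a) (bv p.swap)
  rw [hA p.swap (by simpa using hp), om_bv, om_bv_bv, Sum.swap_swap] at h1
  · have := sg_sq p.swap
    rcases mul_eq_zero.mp h1 with h | h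
    · rw [h] at this; simp at this
    · exact h
  · intro h
    have := congrArg ix h
    simp at this
    rw [this] at hp; exact hp ha

lemma qform_single (a : HypIdx g) (w : HypIdx g → ℤ) (h : ∀ p, ix p ≠ ix a → w p = 0) :
    qform g w = ((w a * w a.swap : ℤ) : ZMod 2) := by
  rw [qform, Finset.sum_eq_single (ix a)]
  · cases a
    · rfl
    · rw [mul_comm]; rfl
  · intro i _ hi
    rw [h (inl i) hi]; simp
  · simp

lemma clear_aux {S : Finset (Fin g)} (a : HypIdx g) (ha : ix a ∈ S) (w : HypIdx g → ℤ) (m : ℤ)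
    (hm : m * m = 1) (hwa : w a.swap = m) (T : Finset (HypIdx g))
    (hT : ∀ p ∈ T, ix p ∈ S ∧ ix p ≠ ix a) :
    ∃ n ∈ NS S, act n (bv a) = bv a ∧ act n w a.swap = m ∧ (∀ p ∈ T, act n w p = 0) ∧
      ∀ p, ix p ∉ S → act n w p = w p := by
  induction T using Finset.induction_on with
  | empty => exact ⟨1, one_mem _, act_one _, by rw [act_one, hwa], by simp, by simp [act_one]⟩
  | insert p T hp ih =>
    obtain ⟨n, hn, h1, h2, h3, h4⟩ := ih fun r hr => hT r (Finset.mem_insert_of_mem hr)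
    obtain ⟨hpS, hpa⟩ := hT p (Finset.mem_insert_self _ _)
    have hh : p ≠ a.swap := by rintro rfl; simp at hpa
    have hpa' : p ≠ a := by rintro rfl; simp at hpa
    set c := -(m * sg a * act n w p) with hc
    refine ⟨Eb a p hh c * n, mul_mem (Eb_mem hh c ha hpS) hn, ?_, ?_, ?_, ?_⟩
    · rw [act_mul, h1]
      ext t
      have e1 : a.swap ≠ a := swap_ne a
      have e2 : p.swap ≠ a := by rintro rfl; simp at hh
      rw [act_Eb]; simp [bv_apply, e1, e2]
    · rw [act_mul, act_Eb, if_neg (Ne.symm hh), if_neg (swap_ne a), h2]; simp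
    · intro r hr
      rw [act_mul, act_Eb, h2]
      have hra : r ≠ a := by
        rintro rfl; exact (hT r hr).2 rfl
      rw [if_neg hra]
      rcases Finset.mem_insert.mp hr with rfl | hr2
      · rw [if_pos rfl, hc]
        have := sg_sq a
        linear_combination (- act n w r) * (m * m) * this - act n w r * hm
      · have : r ≠ p := by rintro rfl; exact hp hr2
        rw [if_neg this, h3 r hr2]; simp
    · intro r hr
      have e1 : r ≠ a := by rintro rfl; exact hr ha
      have e2 : r ≠ p := by rintro rfl; exact hr hpS
      rw [act_mul, act_Eb, if_neg e1, if_neg e2, h4 r hr]; simp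

lemma clear {S : Finset (Fin g)} (a : HypIdx g) (ha : ix a ∈ S) (w : HypIdx g → ℤ) (m : ℤ)
    (hm : m * m = 1) (hwa : w a.swap = m) (hq : qform g w = 0) (hout : ∀ p, ix p ∉ S → w p = 0) :
    ∃ n ∈ NS S, act n (bv a) = bv a ∧ act n w = m • bv a.swap := by
  obtain ⟨n, hn, h1, h2, h3, h4⟩ := clear_aux a ha w m hm hwa
    (Finset.univ.filter fun p => ix p ∈ S ∧ ix p ≠ ix a) (by simp)
  have h5 : ∀ p, ix p ≠ ix a → act n w p = 0 := by
    intro p hp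
    by_cases hS : ix p ∈ S
    · exact h3 p (by simp [hS, hp])
    · rw [h4 p hS, hout p hS]
  have h6 := qform_single a (act n w) h5
  rw [qform_act, hq, h2, eq_comm, ZMod.intCast_zmod_eq_zero_iff_dvd] at h6
  have h7 : (2 : ℤ) ∣ act n w a := by
    have : act n w a = (act n w a * m) * m := by rw [mul_assoc, hm, mul_one]
    rw [this]; exact Dvd.dvd.mul_right (by exact_mod_cast h6) _
  obtain ⟨d, hd⟩ := h7
  have hh : a ≠ a.swap := (swap_ne a).symm
  refine ⟨Eb a a hh (-(d * m * sg a)) * n, mul_mem (Eb_mem hh _ ha ha) hn, ?_, ?_⟩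
  · rw [act_mul, h1]
    ext t
    rw [act_Eb]; simp [bv_apply, swap_ne a]
  · rw [act_mul]
    ext t
    rw [act_Eb, h2]
    by_cases ht : t = a
    · subst ht
      simp only [if_true, Pi.smul_apply, bv_apply, if_neg hh, hd]
      have := sg_sq t
      simp only [smul_eq_mul, mul_zero]
      linear_combination (-2 * d) * (m * m) * this - 2 * d * hm
    · rw [if_neg ht]
      by_cases ht2 : t = a.swap
      · subst ht2; simp [bv_apply, h2]
      · have : ix t ≠ ix a := by
          rw [Ne, ix_eq_iff]; tauto
        simp [h5 t this, bv_apply, ht2]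

end part3

section part4
open Sum
variable {g : ℕ}

lemma ne_of_ix {p q : HypIdx g} (h : ix p ≠ ix q) : p ≠ q := fun e => h (congrArg ix e)

lemma arith1 (y m : ℤ) (hm : m ≠ 0) : ∃ c : ℤ, -|m| ≤ y + 2 * c * m ∧ y + 2 * c * m < |m| := by
  have hM : 0 < 2 * |m| := by positivity
  have a1 := Int.emod_nonneg (y + |m|) hM.ne'
  have a2 := Int.emod_lt_of_pos (y + |m|) hM
  have a3 := Int.emod_add_mul_ediv (y + |m|) (2 * |m|)
  generalize (y + |m|) / (2 * |m|) = Q at *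
  generalize (y + |m|) % (2 * |m|) = r at *
  rcases abs_choice m with h | h <;> rw [h] at a2 a3 ⊢
  · refine ⟨-Q, ?_, ?_⟩ <;> linarith
  · refine ⟨Q, ?_, ?_⟩ <;> linarith

lemma arith2 (m r : ℤ) (h0 : r ≠ 0) (a1 : 0 ≤ r) (a2 : r < |m|)
    (k1 : m + 1 * r ≠ 0 → m.natAbs ≤ (m + 1 * r).natAbs)
    (k2 : m + -1 * r ≠ 0 → m.natAbs ≤ (m + -1 * r).natAbs) : False := by
  rcases abs_choice m with h | h <;> rw [h] at a2 <;> omega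

lemma arith3 (m r : ℤ) (h1 : -|m| ≤ r) (h2 : r < |m|) (h : m.natAbs ≤ r.natAbs) : r = -|m| := by
  rcases abs_choice m with h3 | h3 <;> rw [h3] at h1 h2 ⊢ <;> omega

lemma exists_nonzero {S : Finset (Fin g)} (k : Fin g) (hk : k ∈ S) (w : HypIdx g → ℤ) (hw : w ≠ 0)
    (hout : ∀ p, ix p ∉ S → w p = 0) : ∃ n ∈ NS S, act n w (inl k) ≠ 0 := by
  by_contra! hcon
  have h1 : w (inl k) = 0 := by simpa [act_one] using hcon 1 (one_mem _)
  have h2 : w (inr k) = 0 := by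
    have := hcon (Jk k) (Jk_mem hk)
    rw [act_Jk_inl] at this; simpa using this
  apply hw
  ext p
  by_contra hp
  simp only [Pi.zero_apply] at hp
  have hpS : ix p ∈ S := by by_contra h; exact hp (hout p h)
  have hpk : ix p ≠ ix (inl k : HypIdx g) := by
    rw [Ne, ix_eq_iff]
    rintro (rfl | rfl)
    · exact hp h1
    · exact hp h2
  have hh : p.swap ≠ (inl k : HypIdx g).swap := by
    apply ne_of_ix; simpa using hpk
  have := hcon (Eb (inl k) p.swap hh 1) (Eb_mem hh 1 hk (by simpa using hpS))
  rw [act_Eb, if_neg, if_pos rfl, h1, Sum.swap_swap] at this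
  · have h3 := sg_sq p.swap
    simp at this
    rcases this with h | h
    · rw [h] at h3; simp at h3
    · exact hp h
  · apply ne_of_ix; rw [ix_swap]; exact hpk.symm

lemma dvd_of_min {S : Finset (Fin g)} (k : Fin g) (hk : k ∈ S) (w : HypIdx g → ℤ)
    (hm : w (inl k) ≠ 0) (hout : ∀ p, ix p ∉ S → w p = 0)
    (hmin : ∀ n ∈ NS S, act n w (inl k) ≠ 0 → (w (inl k)).natAbs ≤ (act n w (inl k)).natAbs)
    (p : HypIdx g) : w (inl k) ∣ w p := by
  set m := w (inl k) with hmdef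
  by_cases hpk : ix p = ix (inl k : HypIdx g)
  · rw [ix_eq_iff] at hpk
    rcases hpk with rfl | rfl
    · exact dvd_rfl
    · -- the dual coordinate
      simp only [Sum.swap_inl]
      have key : ∀ c : ℤ, w (inr k) + 2 * c * m ≠ 0 →
          m.natAbs ≤ (w (inr k) + 2 * c * m).natAbs := by
        intro c hc
        have hh : (inr k : HypIdx g) ≠ (inr k : HypIdx g).swap := by simp
        have e : act (Jk k * Eb (inr k) (inr k) hh c) w (inl k) = - (w (inr k) + 2 * c * m) := by
          rw [act_mul, act_Jk_inl, if_pos rfl, act_Eb]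
          simp [← hmdef]; ring
        have := hmin _ (mul_mem (Jk_mem hk) (Eb_mem hh c hk hk))
        rw [e] at this
        rw [Int.natAbs_neg] at this
        exact this (neg_ne_zero.mpr hc)
      obtain ⟨c, hc1, hc2⟩ := arith1 (w (inr k)) m hm
      have h3 := key c
      have h4 : m ∣ w (inr k) + 2 * c * m := by
        by_cases h0 : w (inr k) + 2 * c * m = 0
        · rw [h0]; exact dvd_zero _
        · rw [arith3 _ _ hc1 hc2 (h3 h0), dvd_neg, dvd_abs]
      exact (dvd_add_left (Dvd.intro_left _ rfl)).mp h4
  · by_cases hpS : ix p ∈ S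
    · have hh : p ≠ (inr k : HypIdx g).swap := ne_of_ix (by simpa using hpk)
      have hh' : p.swap ≠ (inl k : HypIdx g).swap := ne_of_ix (by simpa using hpk)
      have hpS' : ix p.swap ∈ S := by simpa using hpS
      have key : ∀ c c' : ℤ, m + c' * (w p + c * m) ≠ 0 →
          m.natAbs ≤ (m + c' * (w p + c * m)).natAbs := by
        intro c c' hc
        have e : act (Eb (inl k) p.swap hh' (c' * sg p.swap) * Eb (inr k) p hh c) w (inl k)
            = m + c' * (w p + c * m) := by
          have h1 : (inl k : HypIdx g) ≠ p.swap := ne_of_ix (by simpa using Ne.symm hpk)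
          have h2 : (inl k : HypIdx g) ≠ p := ne_of_ix (Ne.symm hpk)
          have h3 : p ≠ inr k := ne_of_ix hpk
          have h4 := sg_sq p.swap
          rw [act_mul, act_Eb, if_neg h1, if_pos rfl, Sum.swap_swap, act_Eb, act_Eb, if_neg h2,
            if_pos rfl, if_neg (by simp), if_neg h3, ← hmdef]
          simp only [Sum.swap_inr, sg_inr, ← hmdef]
          linear_combination (c' * (w p + c * m)) * h4
        have := hmin _ (mul_mem (Eb_mem hh' (c' * sg p.swap) hk hpS') (Eb_mem hh c hk hpS))
        rw [e] at this
        exact this hc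
      have a1 := Int.emod_nonneg (w p) hm
      have a2 := Int.emod_lt_abs (w p) hm
      have a3 := Int.emod_add_mul_ediv (w p) m
      by_cases h0 : w p % m = 0
      · exact Int.dvd_of_emod_eq_zero h0
      · exfalso
        have e : w p + (-(w p / m)) * m = w p % m := by linear_combination - a3
        have k1 := key (-(w p / m)) 1
        have k2 := key (-(w p / m)) (-1)
        rw [e] at k1 k2
        exact arith2 _ _ h0 a1 a2 k1 k2
    · rw [hout p hpS]; exact dvd_zero _

lemma step1 {S : Finset (Fin g)} (k : Fin g) (hk : k ∈ S) (A : Spq g)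
    (hA : ∀ p : HypIdx g, ix p ∉ S → act A (bv p) = bv p) :
    ∃ n ∈ NS S, act (n * A) (bv (inl k)) = bv (inl k) := by
  have hfix : ∀ n ∈ NS S, ∀ p : HypIdx g, ix p ∉ S → act (n * A) (bv p) = bv p := by
    intro n hn p hp
    rw [act_mul, hA p hp, NS_fix hn p hp]
  have hne : act A (bv (inl k)) ≠ 0 := by
    intro h
    have h2 := act_inv_act A (bv (inl k))
    rw [h] at h2
    have := congrFun h2 (inl k)
    simp [act] at this
  obtain ⟨n0, hn0, h0⟩ := exists_nonzero k hk _ hne (fun p hp => zero_out hA _ p hk hp)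
  classical
  have hex : ∃ d : ℕ, ∃ n ∈ NS S, act (n * A) (bv (inl k)) (inl k) ≠ 0 ∧
      (act (n * A) (bv (inl k)) (inl k)).natAbs = d :=
    ⟨_, n0, hn0, by rwa [act_mul], rfl⟩
  obtain ⟨n, hn, h1, h2⟩ := Nat.find_spec hex
  set w := act (n * A) (bv (inl k)) with hw
  have hmin : ∀ n' ∈ NS S, act n' w (inl k) ≠ 0 →
      (w (inl k)).natAbs ≤ (act n' w (inl k)).natAbs := by
    intro n' hn' h
    rw [h2]
    apply Nat.find_min' hex
    refine ⟨n' * n, mul_mem hn' hn, ?_, ?_⟩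
    · rwa [mul_assoc, act_mul]
    · rw [mul_assoc, act_mul]
  have hout : ∀ p, ix p ∉ S → w p = 0 := fun p hp => zero_out (hfix n hn) _ p hk hp
  have hd := dvd_of_min k hk w h1 hout hmin
  have hunit : w (inl k) ∣ 1 := by
    choose w' hw' using hd
    have e : w = w (inl k) • w' := by ext p; exact hw' p
    have e2 := act_inv_act (n * A) (bv (inl k))
    rw [← hw, e, act_smul] at e2
    have := congrFun e2 (inl k)
    simp only [Pi.smul_apply, smul_eq_mul, bv_apply, if_true] at this
    exact ⟨_, this.symm⟩
  have hmm : w (inl k) * w (inl k) = 1 := by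
    rcases Int.isUnit_iff.mp (isUnit_of_dvd_one hunit) with h | h <;> rw [h] <;> norm_num
  have hq : qform g w = 0 := by rw [hw, qform_act, q_bv]
  obtain ⟨n2, hn2, -, h4⟩ := clear (inr k) hk w (w (inl k)) hmm rfl hq hout
  rcases Int.isUnit_iff.mp (isUnit_of_dvd_one hunit) with h | h
  · refine ⟨n2 * n, mul_mem hn2 hn, ?_⟩
    rw [mul_assoc, act_mul, ← hw, h4, h, one_smul]; rfl
  · refine ⟨Jk k * Jk k * (n2 * n), mul_mem (mul_mem (Jk_mem hk) (Jk_mem hk)) (mul_mem hn2 hn), ?_⟩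
    rw [mul_assoc (Jk k * Jk k), act_mul (Jk k * Jk k), mul_assoc, act_mul n2, ← hw, h4, h, act_mul]
    ext p
    rcases p with i | i
    · rw [act_Jk_inl, act_Jk_inr]
      split_ifs with hi <;> simp [act_Jk_inl, act_Jk_inr, bv_apply, hi]
    · rw [act_Jk_inr, act_Jk_inl]
      split_ifs with hi <;> simp [act_Jk_inl, act_Jk_inr, bv_apply, hi]

lemma step2 {S : Finset (Fin g)} (k : Fin g) (hk : k ∈ S) (A : Spq g)
    (hA : ∀ p : HypIdx g, ix p ∉ S → act A (bv p) = bv p) :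
    ∃ n ∈ NS S, act (n * A) (bv (inl k)) = bv (inl k) ∧ act (n * A) (bv (inr k)) = bv (inr k) := by
  obtain ⟨n, hn, h1⟩ := step1 k hk A hA
  have hfix : ∀ p : HypIdx g, ix p ∉ S → act (n * A) (bv p) = bv p := by
    intro p hp
    rw [act_mul, hA p hp, NS_fix hn p hp]
  set w := act (n * A) (bv (inr k)) with hw
  have h2 : w (inr k) = 1 := by
    have := om_act (n * A) (bv (inr k)) (bv (inl k))
    rw [h1, ← hw, om_bv, om_bv] at this
    simpa [bv_apply] using this
  obtain ⟨n2, hn2, h3, h4⟩ := clear (inl k) hk w 1 (by norm_num) h2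
    (by rw [hw, qform_act, q_bv]) (fun p hp => zero_out hfix _ p hk hp)
  refine ⟨n2 * n, mul_mem hn2 hn, ?_, ?_⟩
  · rw [mul_assoc, act_mul, h1, h3]
  · rw [mul_assoc, act_mul, ← hw, h4, one_smul]; rfl

lemma gen_aux (S : Finset (Fin g)) : ∀ A : Spq g,
    (∀ p : HypIdx g, ix p ∉ S → act A (bv p) = bv p) → A ∈ NS S := by
  induction S using Finset.induction_on with
  | empty =>
    intro A hA
    have : A = 1 := act_ext_bv fun p => by rw [hA p (by simp), act_one]
    rw [this]; exact one_mem _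
  | insert k S hkS ih =>
    intro A hA
    obtain ⟨n, hn, h1, h2⟩ := step2 k (Finset.mem_insert_self k S) A hA
    have h3 : n * A ∈ NS S := by
      apply ih
      intro p hp
      by_cases hpk : ix p = k
      · rcases p with i | i
        · simp at hpk; rw [hpk, h1]
        · simp at hpk; rw [hpk, h2]
      · have : ix p ∉ insert k S := by simp [hp, hpk]
        rw [act_mul, hA p this, NS_fix hn p this]
    have h4 := NS_mono (Finset.subset_insert k S) h3
    have : A = n⁻¹ * (n * A) := by group
    rw [this]
    exact mul_mem (inv_mem hn) h4

lemma NS_univ : NS (Finset.univ : Finset (Fin g)) = ⊤ := by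
  rw [eq_top_iff]
  intro A _
  exact gen_aux _ A (by simp)

end part4

section part5
open Sum
variable {g : ℕ}

def Pl (σ : Equiv.Perm (Fin g)) : (HypIdx g → ℤ) →ₗ[ℤ] (HypIdx g → ℤ) where
  toFun w := fun p => w (Sum.map σ σ p)
  map_add' a b := rfl
  map_smul' r a := rfl

lemma Pl_apply (σ : Equiv.Perm (Fin g)) (w p) : Pl σ w p = w (Sum.map σ σ p) := rfl

/-- permutation element -/
def Pk (σ : Equiv.Perm (Fin g)) : Spq g :=
  mkS (Pl σ) (Pl σ.symm)
    (fun w => by ext p; cases p <;> simp [Pl_apply])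
    (fun w => by ext p; cases p <;> simp [Pl_apply])
    (fun w w' => by
      simp only [om, Pl_apply, Sum.map_inl, Sum.map_inr]
      exact Equiv.sum_comp σ (fun i => w (inl i) * w' (inr i) - w (inr i) * w' (inl i)))
    (fun w => by
      simp only [qform, Pl_apply, Sum.map_inl, Sum.map_inr]
      exact Equiv.sum_comp σ (fun i => (((w (inl i) * w (inr i) : ℤ)) : ZMod 2)))

lemma act_Pk (σ : Equiv.Perm (Fin g)) (w p) : act (Pk σ) w p = w (Sum.map σ σ p) := by
  rw [Pk, act_mkS, Pl_apply]

lemma Pk_mul_Jk (σ : Equiv.Perm (Fin g)) (k : Fin g) : Pk σ * Jk (σ k) = Jk k * Pk σ := by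
  apply act_ext; intro w
  ext p
  rw [act_mul, act_mul]
  rcases p with i | i
  · simp [act_Pk, act_Jk_inl]
  · simp [act_Pk, act_Jk_inr]

lemma Jk_sq (k : Fin g) (w : HypIdx g → ℤ) (p : HypIdx g) :
    act (Jk k * Jk k) w p = if ix p = k then - w p else w p := by
  rw [act_mul]
  rcases p with i | i
  · rw [act_Jk_inl, act_Jk_inl, act_Jk_inr]; by_cases h : i = k <;> simp [h]
  · rw [act_Jk_inr, act_Jk_inr, act_Jk_inl]; by_cases h : i = k <;> simp [h]

lemma Jk_four (k : Fin g) : (Jk k : Spq g) ^ 4 = 1 := by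
  have : (Jk k : Spq g) ^ 4 = (Jk k * Jk k) * (Jk k * Jk k) := by
    simp only [pow_succ, pow_zero, one_mul, mul_assoc]
  rw [this]
  apply act_ext; intro w; ext p
  rw [act_mul, Jk_sq, Jk_sq, act_one]
  split_ifs <;> simp

lemma E_congr {u v u' v' : HypIdx g → ℤ} (e1 : u = u') (e2 : v = v') (h hu hv h' hu' hv') :
    E u v h hu hv = E u' v' h' hu' hv' := by subst e1 e2; rfl

variable {C : Type*} [CommGroup C] (f : Spq g →* C)

lemma f_Eb (hg : 3 ≤ g) (p q : HypIdx g) (h : q ≠ p.swap) (c : ℤ) : f (Eb p q h c) = 1 := by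
  obtain ⟨r, hr⟩ : ∃ r : Fin g, r ∉ ({ix p, ix q} : Finset (Fin g)) := by
    by_contra! hcon
    have h1 : (Finset.univ : Finset (Fin g)).card ≤ ({ix p, ix q} : Finset (Fin g)).card :=
      Finset.card_le_card fun x _ => hcon x
    have h2 : ({ix p, ix q} : Finset (Fin g)).card ≤ 2 := Finset.card_le_two
    simp at h1; omega
  simp only [Finset.mem_insert, Finset.mem_singleton, not_or] at hr
  obtain ⟨hrp, hrq⟩ := hr
  have hx : q ≠ (inl r : HypIdx g).swap := ne_of_ix (by simpa using Ne.symm hrq)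
  have n1 : (inr r : HypIdx g) ≠ p.swap := ne_of_ix (by simpa using hrp)
  have n2 : q.swap ≠ (inr r : HypIdx g) := ne_of_ix (by simpa using Ne.symm hrq)
  have n3 : (inr r : HypIdx g) ≠ p := ne_of_ix (by simpa using hrp)
  have n4 : q.swap ≠ p := by rintro rfl; simp at h
  set X := Eb (inl r) q hx (-c) with hX
  have a1 : act X (bv p) = bv p := by
    ext t
    rw [hX, act_Eb]
    simp [bv_apply, n3, n4]
  have a2 : act X (bv (inr r)) = bv (inr r) + c • bv q := by
    ext t
    rw [hX, act_Eb]
    simp [bv_apply, n2]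
  have o1 : om (bv p) (bv (inr r)) = 0 := om_bv_bv _ _ n1
  have o2 : om (bv p) (c • bv q) = 0 := by rw [om_smul_right, om_bv_bv _ _ h, mul_zero]
  have o3 : om (bv (inr r)) (c • bv q) = 0 := by
    rw [om_smul_right, om_bv_bv _ _ (ne_of_ix (by simpa using Ne.symm hrq)), mul_zero]
  have o4 : om (bv p) (bv (inr r) + c • bv q) = 0 := by rw [om_add_right, o1, o2, add_zero]
  have q3 : qform g (bv (inr r) + c • bv q) = 0 := by
    rw [qform_add, q_bv, q_smul_bv, o3]; simp
  have e1 := conj_E X (bv p) (bv (inr r)) o1 (q_bv _) (q_bv _)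
  rw [E_congr a1 a2 _ _ _ o4 (q_bv _) q3] at e1
  rw [← E_mul (bv p) (bv (inr r)) (c • bv q) o1 (q_bv _) (q_bv _) o2 (q_smul_bv _ _) o3] at e1
  have e2 := congrArg f e1
  rw [map_mul, map_mul, map_mul, map_inv, mul_comm (f X), mul_inv_cancel_right] at e2
  exact (mul_eq_right.mp e2.symm)

lemma f_Jk (k l : Fin g) : f (Jk k) = f (Jk l) := by
  have h := congrArg f (Pk_mul_Jk (Equiv.swap l k) l)
  rw [map_mul, map_mul, mul_comm, Equiv.swap_apply_left] at h
  exact mul_right_cancel h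

lemma f_mem (hg : 3 ≤ g) (k : Fin g) (A : Spq g) : ∃ n : ℤ, f A = f (Jk k) ^ n := by
  have : NS (Finset.univ : Finset (Fin g)) ≤ (Subgroup.zpowers (f (Jk k))).comap f := by
    rw [NS, Subgroup.closure_le]
    rintro A (⟨p, q, hh, c, hp, hq, rfl⟩ | ⟨l, hl, rfl⟩)
    · simp only [SetLike.mem_coe, Subgroup.mem_comap]
      rw [f_Eb f hg]; exact one_mem _
    · simp only [SetLike.mem_coe, Subgroup.mem_comap]
      rw [f_Jk f l k]; exact Subgroup.mem_zpowers _
  rw [NS_univ] at this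
  obtain ⟨n, hn⟩ := Subgroup.mem_zpowers_iff.mp (this (Subgroup.mem_top A))
  exact ⟨n, hn.symm⟩

/-- restriction of a vector -/
def rs (w : HypIdx (g + 1) → ℤ) : HypIdx g → ℤ := fun p => w (Sum.map Fin.castSucc Fin.castSucc p)

variable (M N : Matrix (HypIdx g) (HypIdx g) ℤ) (w : HypIdx (g + 1) → ℤ)

lemma ext_inl (i : Fin g) : (extendMat M *ᵥ w) (inl i.castSucc) = (M *ᵥ rs w) (inl i) := by
  simp only [Matrix.mulVec, dotProduct, Fintype.sum_sum_type, Fin.sum_univ_castSucc]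
  simp [extendMat, rs, Fin.ext_iff, (Fin.is_lt i).ne]
lemma ext_inr (i : Fin g) : (extendMat M *ᵥ w) (inr i.castSucc) = (M *ᵥ rs w) (inr i) := by
  simp only [Matrix.mulVec, dotProduct, Fintype.sum_sum_type, Fin.sum_univ_castSucc]
  simp [extendMat, rs, Fin.ext_iff, (Fin.is_lt i).ne]
lemma ext_inl_last : (extendMat M *ᵥ w) (inl (Fin.last g)) = w (inl (Fin.last g)) := by
  simp only [Matrix.mulVec, dotProduct, Fintype.sum_sum_type, Fin.sum_univ_castSucc]
  simp [extendMat, Fin.ext_iff]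
  exact Finset.sum_eq_zero fun i _ => by simp [(Fin.is_lt i).ne']
lemma ext_inr_last : (extendMat M *ᵥ w) (inr (Fin.last g)) = w (inr (Fin.last g)) := by
  simp only [Matrix.mulVec, dotProduct, Fintype.sum_sum_type, Fin.sum_univ_castSucc]
  simp [extendMat, Fin.ext_iff]
  exact Finset.sum_eq_zero fun i _ => by simp [(Fin.is_lt i).ne']
lemma rs_ext : rs (extendMat M *ᵥ w) = M *ᵥ rs w := by
  ext p; rcases p with i | i
  · exact ext_inl M w i
  · exact ext_inr M w i

lemma mat_ext {n : Type*} [Fintype n] [DecidableEq n] {X Y : Matrix n n ℤ}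
    (h : ∀ w, X *ᵥ w = Y *ᵥ w) : X = Y := by
  ext i j
  simpa using congrFun (h (Pi.single j 1)) i

lemma vec_cases {w w' : HypIdx (g + 1) → ℤ} (h : rs w = rs w')
    (h1 : w (inl (Fin.last g)) = w' (inl (Fin.last g)))
    (h2 : w (inr (Fin.last g)) = w' (inr (Fin.last g))) : w = w' := by
  ext p; rcases p with i | i
  · refine Fin.lastCases h1 (fun i => ?_) i
    exact congrFun h (inl i)
  · refine Fin.lastCases h2 (fun i => ?_) i
    exact congrFun h (inr i)

lemma ext_mul : extendMat M * extendMat N = extendMat (M * N) := by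
  apply mat_ext; intro w
  rw [← Matrix.mulVec_mulVec]
  apply vec_cases
  · rw [rs_ext, rs_ext, rs_ext, Matrix.mulVec_mulVec]
  · rw [ext_inl_last, ext_inl_last, ext_inl_last]
  · rw [ext_inr_last, ext_inr_last, ext_inr_last]

lemma ext_one : extendMat (1 : Matrix (HypIdx g) (HypIdx g) ℤ) = 1 := by
  apply mat_ext; intro w
  apply vec_cases
  · rw [rs_ext, Matrix.one_mulVec, Matrix.one_mulVec]
  · rw [ext_inl_last, Matrix.one_mulVec]
  · rw [ext_inr_last, Matrix.one_mulVec]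

lemma om_rs (w w' : HypIdx (g + 1) → ℤ) : om w w' = om (rs w) (rs w') +
    (w (inl (Fin.last g)) * w' (inr (Fin.last g)) - w (inr (Fin.last g)) * w' (inl (Fin.last g))) := by
  rw [om, Fin.sum_univ_castSucc]; rfl

lemma q_rs (w : HypIdx (g + 1) → ℤ) : qform (g + 1) w = qform g (rs w) +
    ((w (inl (Fin.last g)) * w (inr (Fin.last g)) : ℤ) : ZMod 2) := by
  rw [qform, Fin.sum_univ_castSucc]; rfl

/-- the stabilisation map -/
def phi : Spq g →* Spq (g + 1) where
  toFun A := ⟨⟨extendMat A.val.val, extendMat A.val⁻¹.val, by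
      rw [ext_mul, ← Units.val_mul, mul_inv_cancel, Units.val_one, ext_one], by
      rw [ext_mul, ← Units.val_mul, inv_mul_cancel, Units.val_one, ext_one]⟩, by
      constructor
      · apply Sp_of_om
        intro a b
        show om (extendMat A.val.val *ᵥ a) (extendMat A.val.val *ᵥ b) = _
        rw [om_rs, rs_ext, rs_ext, ext_inl_last, ext_inl_last, ext_inr_last, ext_inr_last, om_rs a b]
        congr 1
        exact om_act A _ _
      · intro v
        show qform _ (extendMat A.val.val *ᵥ v) = _
        rw [q_rs, rs_ext, ext_inl_last, ext_inr_last, q_rs v]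
        congr 1
        exact qform_act A _⟩
  map_one' := by
    apply Subtype.ext; apply Units.ext
    exact ext_one
  map_mul' A B := by
    apply Subtype.ext; apply Units.ext
    exact (ext_mul _ _).symm

lemma phi_val (A : Spq g) : (phi A).val.val = extendMat A.val.val := rfl

lemma phi_Jk (k : Fin g) : phi (Jk k) = Jk k.castSucc := by
  apply act_ext; intro w
  have e : act (phi (Jk k)) w = extendMat (Jk k).val.val *ᵥ w := rfl
  rw [e]
  apply vec_cases
  · rw [rs_ext]
    change act (Jk k) (rs w) = _
    ext p
    rcases p with i | i
    · rw [act_Jk_inl]; simp [rs, act_Jk_inl]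
    · rw [act_Jk_inr]; simp [rs, act_Jk_inr]
  · rw [ext_inl_last, act_Jk_inl, if_neg (by simp [Fin.ext_iff, (Fin.is_lt k).ne'])]
  · rw [ext_inr_last, act_Jk_inr, if_neg (by simp [Fin.ext_iff, (Fin.is_lt k).ne'])]

lemma final_aux (hg : 3 ≤ g) (chi : Spq (g + 1) →* ℂˣ) (l : Fin (g + 1))
    (hchi : ∀ n : ℤ, chi (Jk l) ^ n = 1 → (4 : ℤ) ∣ n) :
    Function.Bijective (Abelianization.map (phi (g := g))) := by
  have k : Fin g := ⟨0, by omega⟩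
  constructor
  · rw [injective_iff_map_eq_one]
    intro x hx
    obtain ⟨A, rfl⟩ := QuotientGroup.mk_surjective x
    change Abelianization.map phi (Abelianization.of A) = 1 at hx
    change Abelianization.of A = 1
    obtain ⟨n, hn⟩ := f_mem Abelianization.of hg k A
    rw [hn, map_zpow, Abelianization.map_of, phi_Jk, f_Jk Abelianization.of _ l] at hx
    have h2 := congrArg (Abelianization.lift chi) hx
    rw [map_zpow, Abelianization.lift_apply_of, map_one] at h2
    obtain ⟨d, rfl⟩ := hchi n h2
    rw [hn, _root_.zpow_mul]
    have : (Abelianization.of (Jk k : Spq g)) ^ (4 : ℤ) = 1 := by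
      rw [← map_zpow]
      have := Jk_four k
      rw [show (4 : ℤ) = ((4 : ℕ) : ℤ) by rfl, zpow_natCast, this, map_one]
    rw [this, _root_.one_zpow]
  · intro x
    obtain ⟨A, rfl⟩ := QuotientGroup.mk_surjective x
    change ∃ a, Abelianization.map phi a = Abelianization.of A
    obtain ⟨n, hn⟩ := f_mem Abelianization.of (by omega) k.castSucc A
    refine ⟨Abelianization.of (Jk k) ^ n, ?_⟩
    rw [hn, map_zpow, Abelianization.map_of, phi_Jk]

end part5

section part6
open Complex

variable {n : ℕ}

/-- Siegel upper half space -/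
structure Hs (τ : Matrix (Fin n) (Fin n) ℂ) : Prop where
  symm : ∀ i j, τ i j = τ j i
  pos : ∀ x : Fin n → ℝ, x ≠ 0 → 0 < ∑ i, ∑ j, x i * x j * (τ i j).im

/-- quadratic form -/
noncomputable def qf (τ : Matrix (Fin n) (Fin n) ℂ) (m : Fin n → ℤ) : ℂ :=
  ∑ i, ∑ j, (m i : ℂ) * (m j : ℂ) * τ i j

noncomputable def th (τ : Matrix (Fin n) (Fin n) ℂ) : ℂ :=
  ∑' m : Fin n → ℤ, cexp (Real.pi * I * qf τ m)

lemma Hs.bound {τ : Matrix (Fin n) (Fin n) ℂ} (h : Hs τ) :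
    ∃ c : ℝ, 0 < c ∧ ∀ x : Fin n → ℝ, c * ∑ i, x i ^ 2 ≤ ∑ i, ∑ j, x i * x j * (τ i j).im := by
  set B : (Fin n → ℝ) → ℝ := fun x => ∑ i, ∑ j, x i * x j * (τ i j).im with hB
  have hBc : Continuous B := by rw [hB]; fun_prop
  have key : ∃ c : ℝ, 0 < c ∧ ∀ x : Fin n → ℝ, ‖x‖ = 1 → c ≤ B x := by
    by_cases hne : (Metric.sphere (0 : Fin n → ℝ) 1).Nonempty
    · obtain ⟨x0, hx0, hmin⟩ := (isCompact_sphere (0 : Fin n → ℝ) 1).exists_isMinOn hne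
        hBc.continuousOn
      refine ⟨B x0, h.pos x0 ?_, fun x hx => hmin (by simpa using hx)⟩
      rintro rfl
      simp at hx0
    · refine ⟨1, one_pos, fun x hx => (hne ⟨x, by simpa using hx⟩).elim⟩
  obtain ⟨c, hc, hcx⟩ := key
  have key2 : ∀ x : Fin n → ℝ, c * ‖x‖ ^ 2 ≤ B x := by
    intro x
    by_cases hx : x = 0
    · subst hx; simp [hB]
    · have hn : 0 < ‖x‖ := norm_pos_iff.mpr hx
      have h1 := hcx (‖x‖⁻¹ • x) (by rw [norm_smul]; simp [hn.ne'])
      have h2 : B (‖x‖⁻¹ • x) = (‖x‖ ^ 2)⁻¹ * B x := by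
        simp only [hB, Pi.smul_apply, smul_eq_mul, Finset.mul_sum]
        refine Finset.sum_congr rfl fun i _ => Finset.sum_congr rfl fun j _ => ?_
        rw [pow_two, mul_inv]; ring
      rw [h2, le_inv_mul_iff₀ (by positivity)] at h1
      linarith
  refine ⟨c / (n + 1), by positivity, fun x => le_trans ?_ (key2 x)⟩
  have h3 : ∑ i, x i ^ 2 ≤ n * ‖x‖ ^ 2 := by
    calc ∑ i, x i ^ 2 ≤ ∑ i : Fin n, ‖x‖ ^ 2 := by
          refine Finset.sum_le_sum fun i _ => ?_
          have := norm_le_pi_norm x i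
          rw [← sq_abs (x i)]
          exact pow_le_pow_left₀ (abs_nonneg _) this 2
      _ = n * ‖x‖ ^ 2 := by simp
  rw [div_mul_eq_mul_div, div_le_iff₀ (by positivity)]
  nlinarith [mul_le_mul_of_nonneg_left h3 hc.le, mul_nonneg hc.le (sq_nonneg ‖x‖)]

lemma summable_gauss (c : ℝ) (hc : 0 < c) :
    Summable fun m : ℤ => Real.exp (-Real.pi * c * (m : ℝ) ^ 2) := by
  have h := (summable_jacobiTheta₂_term_iff 0 (c * I)).mpr (by simpa using hc)
  have h2 := h.norm
  refine h2.congr fun m => ?_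
  rw [norm_jacobiTheta₂_term]
  simp; ring_nf

lemma summable_pi_gauss (f : ℤ → ℝ) (hf : Summable f) (h0 : ∀ m, 0 ≤ f m) :
    ∀ n : ℕ, Summable fun m : Fin n → ℤ => ∏ i, f (m i)
  | 0 => by
      exact (hasSum_fintype _).summable
  | n + 1 => by
      rw [← (Fin.consEquiv fun _ => ℤ).summable_iff]
      have := hf.mul_of_nonneg (summable_pi_gauss f hf h0 n) h0
        (fun m => Finset.prod_nonneg fun i _ => h0 _)
      refine this.congr fun m => ?_
      simp [Fin.prod_univ_succ]

lemma qf_im (τ : Matrix (Fin n) (Fin n) ℂ) (m : Fin n → ℤ) :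
    (qf τ m).im = ∑ i, ∑ j, (m i : ℝ) * (m j : ℝ) * (τ i j).im := by
  simp only [qf, im_sum]
  refine Finset.sum_congr rfl fun i _ => Finset.sum_congr rfl fun j _ => ?_
  rw [← Complex.ofReal_intCast, ← Complex.ofReal_intCast, ← Complex.ofReal_mul,
    Complex.im_ofReal_mul]

lemma norm_term (τ : Matrix (Fin n) (Fin n) ℂ) (m : Fin n → ℤ) :
    ‖cexp (Real.pi * I * qf τ m)‖ = Real.exp (-Real.pi * (qf τ m).im) := by
  rw [norm_exp]; congr 1
  simp

lemma Hs.summable {τ : Matrix (Fin n) (Fin n) ℂ} (h : Hs τ) :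
    Summable fun m : Fin n → ℤ => cexp (Real.pi * I * qf τ m) := by
  obtain ⟨c, hc, hb⟩ := h.bound
  refine Summable.of_norm_bounded (summable_pi_gauss _ (summable_gauss c hc)
    (fun m => (Real.exp_pos _).le) n) fun m => ?_
  rw [norm_term, ← Real.exp_sum, qf_im, ← Finset.mul_sum]
  apply Real.exp_le_exp.mpr
  have := hb fun i => (m i : ℝ)
  have hp := Real.pi_pos
  nlinarith [mul_le_mul_of_nonneg_left this hp.le]

lemma th_add_even (τ S : Matrix (Fin n) (Fin n) ℂ) (hS : ∀ m, ∃ d : ℤ, qf S m = 2 * d) :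
    th (τ + S) = th τ := by
  unfold th
  refine tsum_congr fun m => ?_
  obtain ⟨d, hd⟩ := hS m
  have : qf (τ + S) m = qf τ m + qf S m := by
    simp only [qf, Matrix.add_apply, mul_add, Finset.sum_add_distrib]
  rw [this, hd, mul_add, Complex.exp_add]
  have : cexp (Real.pi * I * (2 * d)) = 1 := by
    rw [Complex.exp_eq_one_iff]; exact ⟨d, by ring⟩
  rw [this, mul_one]

lemma th_perm (τ : Matrix (Fin n) (Fin n) ℂ) (σ : Equiv.Perm (Fin n)) :
    th (τ.submatrix σ σ) = th τ := by
  unfold th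
  rw [← (Equiv.arrowCongr σ (Equiv.refl ℤ)).tsum_eq (fun m => cexp (Real.pi * I * qf τ m))]
  refine tsum_congr fun m => ?_
  congr 2
  unfold qf
  refine Eq.trans ?_ (Equiv.sum_comp σ _)
  refine Finset.sum_congr rfl fun i _ => ?_
  refine Eq.trans ?_ (Equiv.sum_comp σ _)
  simp

/-- inversion in the first variable -/
noncomputable def inv0 (τ : Matrix (Fin (n+1)) (Fin (n+1)) ℂ) : Matrix (Fin (n+1)) (Fin (n+1)) ℂ :=
  fun i j => Fin.cases (Fin.cases (-1 / τ 0 0) (fun j => τ 0 j.succ / τ 0 0) j)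
    (fun i => Fin.cases (τ i.succ 0 / τ 0 0)
      (fun j => τ i.succ j.succ - τ i.succ 0 * τ 0 j.succ / τ 0 0) j) i

lemma Hs.t_im {τ : Matrix (Fin (n+1)) (Fin (n+1)) ℂ} (h : Hs τ) : 0 < (τ 0 0).im := by
  have := h.pos (Pi.single 0 1) (by simp)
  simpa [Pi.single_apply] using this

lemma qf_cons {τ : Matrix (Fin (n+1)) (Fin (n+1)) ℂ} (h : ∀ i j, τ i j = τ j i) (a : ℤ)
    (m : Fin n → ℤ) : qf τ (Fin.cons a m) = (a : ℂ) ^ 2 * τ 0 0 + 2 * a * ∑ j, m j * τ 0 j.succ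
      + ∑ i, ∑ j, (m i : ℂ) * m j * τ i.succ j.succ := by
  simp only [qf, Fin.sum_univ_succ, Fin.cons_zero, Fin.cons_succ, Finset.sum_add_distrib]
  have h1 : ∑ j, (a : ℂ) * m j * τ 0 j.succ = a * ∑ j, m j * τ 0 j.succ := by
    rw [Finset.mul_sum]; exact Finset.sum_congr rfl fun j _ => by ring
  have h2 : ∑ j, (m j : ℂ) * a * τ j.succ 0 = a * ∑ j, m j * τ 0 j.succ := by
    rw [Finset.mul_sum]; exact Finset.sum_congr rfl fun j _ => by rw [h j.succ 0]; ring
  rw [h1, h2]; ring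

lemma Hs.th_eq {τ : Matrix (Fin (n+1)) (Fin (n+1)) ℂ} (h : Hs τ) :
    th τ = ∑' m : Fin n → ℤ, cexp (Real.pi * I * ∑ i, ∑ j, (m i : ℂ) * m j * τ i.succ j.succ) *
      jacobiTheta₂ (∑ j, m j * τ 0 j.succ) (τ 0 0) := by
  have hs := h.summable
  rw [← ((Equiv.prodComm _ _).trans (Fin.consEquiv fun _ => ℤ)).summable_iff] at hs
  unfold th
  rw [← ((Equiv.prodComm _ _).trans (Fin.consEquiv fun _ => ℤ)).tsum_eq]
  have e : ∀ (m : Fin n → ℤ) (a : ℤ), cexp (Real.pi * I *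
      qf τ (((Equiv.prodComm _ _).trans (Fin.consEquiv fun _ => ℤ)) (m, a)))
      = cexp (Real.pi * I * ∑ i, ∑ j, (m i : ℂ) * m j * τ i.succ j.succ) *
      jacobiTheta₂_term a (∑ j, m j * τ 0 j.succ) (τ 0 0) := by
    intro m a
    have : ((Equiv.prodComm _ _).trans (Fin.consEquiv fun _ => ℤ)) (m, a)
      = (Fin.cons a m : Fin (n+1) → ℤ) := rfl
    rw [this, qf_cons h.symm, jacobiTheta₂_term, ← Complex.exp_add]
    congr 1; ring
  refine (Summable.tsum_prod hs).trans ?_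
  refine tsum_congr fun m => ?_
  refine (tsum_congr (e m)).trans ?_
  rw [tsum_mul_left]; rfl

lemma th_inv0 {τ : Matrix (Fin (n+1)) (Fin (n+1)) ℂ} (h : Hs τ) (h' : Hs (inv0 τ)) :
    th (inv0 τ) ^ 2 = (-I * τ 0 0) * th τ ^ 2 := by
  have ht : τ 0 0 ≠ 0 := by
    intro h0; have := h.t_im; rw [h0] at this; simp at this
  have ht2 : (-I * τ 0 0) ≠ 0 := by simp [ht]
  have hsq : ((-I * τ 0 0) ^ (1/2 : ℂ)) ^ 2 = -I * τ 0 0 := by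
    rw [one_div]; exact Complex.cpow_nat_inv_pow _ two_ne_zero
  have hne : (-I * τ 0 0) ^ (1/2 : ℂ) ≠ 0 := by
    intro h0; rw [h0] at hsq; simp [ht] at hsq
  suffices th (inv0 τ) = (-I * τ 0 0) ^ (1/2 : ℂ) * th τ by rw [this, mul_pow, hsq]
  rw [h'.th_eq, h.th_eq, ← tsum_mul_left]
  refine tsum_congr fun m => ?_
  rw [jacobiTheta₂_functional_equation (∑ j, m j * τ 0 j.succ) (τ 0 0)]
  set b := ∑ j, m j * τ 0 j.succ with hb
  have e1 : inv0 τ 0 0 = -1 / τ 0 0 := rfl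
  have e2 : ∑ j, m j * inv0 τ 0 j.succ = b / τ 0 0 := by
    rw [hb, Finset.sum_div]; exact Finset.sum_congr rfl fun j _ => by simp [inv0]; ring
  have e3 : ∑ i, ∑ j, (m i : ℂ) * m j * inv0 τ i.succ j.succ
      = ∑ i, ∑ j, (m i : ℂ) * m j * τ i.succ j.succ - b ^ 2 / τ 0 0 := by
    have : b ^ 2 / τ 0 0 = ∑ i, ∑ j, (m i : ℂ) * m j * (τ i.succ 0 * τ 0 j.succ / τ 0 0) := by
      rw [pow_two, hb, Finset.sum_mul_sum, Finset.sum_div]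
      refine Finset.sum_congr rfl fun i _ => ?_
      rw [Finset.sum_div]
      refine Finset.sum_congr rfl fun j _ => ?_
      rw [h.symm i.succ 0]; ring
    rw [this, ← Finset.sum_sub_distrib]
    refine Finset.sum_congr rfl fun i _ => ?_
    rw [← Finset.sum_sub_distrib]
    refine Finset.sum_congr rfl fun j _ => ?_
    simp [inv0]; ring
  rw [e1, e2, e3, mul_sub, sub_eq_add_neg, Complex.exp_add]
  have e4 : -(Real.pi * I * (b ^ 2 / τ 0 0)) = -Real.pi * I * b ^ 2 / τ 0 0 := by ring
  rw [e4]
  field_simp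

lemma th_I_ne : th ((I : ℂ) • (1 : Matrix (Fin n) (Fin n) ℂ)) ≠ 0 := by
  have hH : Hs ((I : ℂ) • (1 : Matrix (Fin n) (Fin n) ℂ)) := by
    constructor
    · intro i j; simp [Matrix.one_apply, eq_comm]
    · intro x hx
      have : ∑ i, ∑ j, x i * x j * (((I : ℂ) • (1 : Matrix (Fin n) (Fin n) ℂ)) i j).im
        = ∑ i, x i * x i := by
        refine Finset.sum_congr rfl fun i _ => ?_
        rw [Finset.sum_eq_single i]
        · simp
        · intro j _ hj; simp [Matrix.one_apply, hj.symm]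
        · simp
      rw [this]
      obtain ⟨i, hi⟩ := Function.ne_iff.mp hx
      exact Finset.sum_pos' (fun i _ => mul_self_nonneg _) ⟨i, Finset.mem_univ _, mul_self_pos.mpr hi⟩
  have e : ∀ m : Fin n → ℤ, cexp (Real.pi * I * qf ((I : ℂ) • (1 : Matrix (Fin n) (Fin n) ℂ)) m)
      = ((Real.exp (- Real.pi * ∑ i, (m i : ℝ) ^ 2) : ℝ) : ℂ) := by
    intro m
    have : qf ((I : ℂ) • (1 : Matrix (Fin n) (Fin n) ℂ)) m = I * ∑ i, (m i : ℂ) ^ 2 := by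
      rw [qf, Finset.mul_sum]
      refine Finset.sum_congr rfl fun i _ => ?_
      rw [Finset.sum_eq_single i]
      · simp; ring
      · intro j _ hj; simp [Matrix.one_apply, hj.symm]
      · simp
    rw [this]
    push_cast
    congr 1
    linear_combination (Real.pi * ∑ i, (m i : ℂ) ^ 2) * I_mul_I
  have hs := hH.summable
  unfold th
  simp only [e] at hs ⊢
  rw [← Complex.ofReal_tsum]
  have hs' : Summable fun m : Fin n → ℤ => Real.exp (- Real.pi * ∑ i, (m i : ℝ) ^ 2) := by
    exact_mod_cast hs
  have := hs'.tsum_pos (fun m => (Real.exp_pos _).le) 0 (Real.exp_pos _)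
  exact_mod_cast this.ne'

end part6

section part7
open Complex Sum

variable {n : ℕ}

/-- complexified matrix -/
noncomputable def cm (A : Spq n) : Matrix (HypIdx n) (HypIdx n) ℂ := A.val.val.map (Int.cast : ℤ → ℂ)

lemma cm_mul (A B : Spq n) : cm (A * B) = cm A * cm B := by
  have : (A * B).val.val = A.val.val * B.val.val := rfl
  rw [cm, this]
  exact Matrix.map_mul (f := Int.castRingHom ℂ)

lemma cm_one : cm (1 : Spq n) = 1 := by
  have : (1 : Spq n).val.val = 1 := rfl
  rw [cm, this]
  exact Matrix.map_one _ (by simp) (by simp)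

lemma cm_apply (A : Spq n) (v : HypIdx n → ℂ) (p) :
    (cm A *ᵥ v) p = ∑ q, (act A (bv q) p : ℂ) * v q := by
  simp only [mulVec, dotProduct, cm, Matrix.map_apply]
  refine Finset.sum_congr rfl fun q _ => ?_
  simp [act, bv]

lemma cm_mul_apply (A : Spq n) (M : Matrix (HypIdx n) (Fin n) ℂ) (p a) :
    (cm A * M) p a = ∑ q, (act A (bv q) p : ℂ) * M q a :=
  cm_apply A (fun q => M q a) p

structure XF (M : Matrix (HypIdx n) (Fin n) ℂ) : Prop where
  iso : ∀ z z', om (M *ᵥ z) (M *ᵥ z') = 0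
  pos : ∀ z, z ≠ 0 → 0 < (∑ i, star ((M *ᵥ z) (inr i)) * (M *ᵥ z) (inl i)).im

lemma om_star (w : HypIdx n → ℂ) :
    (om (star w) w).im = -2 * (∑ i, star (w (inr i)) * w (inl i)).im := by
  simp only [om, im_sum, Finset.mul_sum]
  refine Finset.sum_congr rfl fun i _ => ?_
  simp
  ring

lemma cm_star (A : Spq n) (w : HypIdx n → ℂ) : cm A *ᵥ star w = star (cm A *ᵥ w) := by
  ext p
  simp [mulVec, dotProduct, cm]

lemma om_cm (A : Spq n) (v w : HypIdx n → ℂ) : om (cm A *ᵥ v) (cm A *ᵥ w) = om v w :=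
  om_map_of_Sp A.2.1 v w

lemma XF.act {M : Matrix (HypIdx n) (Fin n) ℂ} (h : XF M) (A : Spq n) : XF (cm A * M) := by
  constructor
  · intro z z'
    rw [← Matrix.mulVec_mulVec, ← Matrix.mulVec_mulVec, om_cm, h.iso]
  · intro z hz
    have h1 := h.pos z hz
    have h2 := om_star ((cm A * M) *ᵥ z)
    rw [← Matrix.mulVec_mulVec, ← cm_star, om_cm, om_star] at h2
    rw [← Matrix.mulVec_mulVec]
    linarith

abbrev tP (M : Matrix (HypIdx n) (Fin n) ℂ) : Matrix (Fin n) (Fin n) ℂ := fun i a => M (inl i) a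
abbrev bQ (M : Matrix (HypIdx n) (Fin n) ℂ) : Matrix (Fin n) (Fin n) ℂ := fun i a => M (inr i) a

lemma XF.det {M : Matrix (HypIdx n) (Fin n) ℂ} (h : XF M) : (bQ M).det ≠ 0 := by
  intro h0
  obtain ⟨v, hv, hv0⟩ := Matrix.exists_mulVec_eq_zero_iff.mpr h0
  have h1 := h.pos v hv
  have h2 : ∀ i, (M *ᵥ v) (inr i) = 0 := fun i => congrFun hv0 i
  simp [h2] at h1

lemma XF.hs {M : Matrix (HypIdx n) (Fin n) ℂ} (h : XF M) (τ : Matrix (Fin n) (Fin n) ℂ)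
    (hτ : tP M = τ * bQ M) : Hs τ := by
  have hu : IsUnit (bQ M).det := isUnit_iff_ne_zero.mpr h.det
  have e1 : ∀ x i, (M *ᵥ ((bQ M)⁻¹ *ᵥ x)) (inr i) = x i := by
    intro x i
    have : bQ M *ᵥ ((bQ M)⁻¹ *ᵥ x) = x := by
      rw [Matrix.mulVec_mulVec, Matrix.mul_nonsing_inv _ hu, Matrix.one_mulVec]
    exact congrFun this i
  have e2 : ∀ x i, (M *ᵥ ((bQ M)⁻¹ *ᵥ x)) (inl i) = (τ *ᵥ x) i := by
    intro x i
    have : tP M *ᵥ ((bQ M)⁻¹ *ᵥ x) = τ *ᵥ x := by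
      rw [hτ, Matrix.mulVec_mulVec, Matrix.mul_assoc, Matrix.mul_nonsing_inv _ hu, Matrix.mul_one]
    exact congrFun this i
  constructor
  · intro i j
    have := h.iso ((bQ M)⁻¹ *ᵥ Pi.single i 1) ((bQ M)⁻¹ *ᵥ Pi.single j 1)
    simp only [om, e1, e2, Finset.sum_sub_distrib] at this
    simp [Pi.single_apply] at this
    rw [sub_eq_zero] at this
    exact this.symm
  · intro x hx
    have h1 := h.pos ((bQ M)⁻¹ *ᵥ fun i => (x i : ℂ)) (by
      intro h0
      apply hx
      ext i
      have := e1 (fun i => (x i : ℂ)) i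
      rw [h0] at this
      simpa using this.symm)
    simp only [e1, e2] at h1
    refine lt_of_lt_of_eq h1 ?_
    rw [im_sum]
    refine Finset.sum_congr rfl fun i _ => ?_
    simp only [mulVec, dotProduct, Finset.mul_sum, im_sum]
    refine Finset.sum_congr rfl fun j _ => ?_
    simp
    ring

noncomputable def Ff (M : Matrix (HypIdx n) (Fin n) ℂ) : ℂ :=
  th (tP M * (bQ M)⁻¹) ^ 2 / (bQ M).det

lemma Ff_eq {M : Matrix (HypIdx n) (Fin n) ℂ} (h : XF M) (τ : Matrix (Fin n) (Fin n) ℂ)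
    (hτ : tP M = τ * bQ M) : Ff M = th τ ^ 2 / (bQ M).det := by
  have hu : IsUnit (bQ M).det := isUnit_iff_ne_zero.mpr h.det
  rw [Ff, hτ, Matrix.mul_assoc, Matrix.mul_nonsing_inv _ hu, Matrix.mul_one]

lemma XF.tau {M : Matrix (HypIdx n) (Fin n) ℂ} (h : XF M) :
    ∃ τ, tP M = τ * bQ M ∧ Hs τ ∧ Ff M = th τ ^ 2 / (bQ M).det := by
  have hu : IsUnit (bQ M).det := isUnit_iff_ne_zero.mpr h.det
  have : tP M = (tP M * (bQ M)⁻¹) * bQ M := by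
    rw [Matrix.mul_assoc, Matrix.nonsing_inv_mul _ hu, Matrix.mul_one]
  exact ⟨_, this, h.hs _ this, Ff_eq h _ this⟩

def Mlt (A : Spq n) (c : ℂ) : Prop :=
  ∀ M : Matrix (HypIdx n) (Fin n) ℂ, XF M → Ff (cm A * M) = c * Ff M

def Good (n : ℕ) : Subgroup (Spq n) where
  carrier := {A | ∃ c : ℂ, c ≠ 0 ∧ Mlt A c}
  one_mem' := ⟨1, one_ne_zero, fun M _ => by rw [cm_one, Matrix.one_mul, one_mul]⟩
  mul_mem' := by
    rintro A B ⟨c, hc, h⟩ ⟨d, hd, h'⟩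
    refine ⟨c * d, mul_ne_zero hc hd, fun M hM => ?_⟩
    rw [cm_mul, Matrix.mul_assoc, h _ (hM.act B), h' _ hM, mul_assoc]
  inv_mem' := by
    rintro A ⟨c, hc, h⟩
    refine ⟨c⁻¹, inv_ne_zero hc, fun M hM => ?_⟩
    have := h _ (hM.act A⁻¹)
    rw [← Matrix.mul_assoc, ← cm_mul, mul_inv_cancel, cm_one, Matrix.one_mul] at this
    rw [this, inv_mul_cancel_left₀ hc]

lemma mem_Good (A : Spq n) : A ∈ Good n ↔ ∃ c : ℂ, c ≠ 0 ∧ Mlt A c := Iff.rfl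

lemma good_Eb_ll (i j : Fin n) (h) (c : ℤ) : (Eb (inl i) (inl j) h c : Spq n) ∈ Good n := by
  refine ⟨1, one_ne_zero, fun M hM => ?_⟩
  obtain ⟨τ, h1, h2, h3⟩ := hM.tau
  have e : ∀ p a, (cm (Eb (inl i) (inl j) h c) * M) p a = M p a
      + (if p = inl j then -(c : ℂ) * M (inr i) a else 0)
      + (if p = inl i then -(c : ℂ) * M (inr j) a else 0) := by
    intro p a
    rw [cm_mul_apply]
    simp only [act_Eb, bv_apply]
    split_ifs <;> simp [add_mul, Finset.sum_add_distrib]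
  have eQ : bQ (cm (Eb (inl i) (inl j) h c) * M) = bQ M := by
    ext a b; simp [bQ, e]
  set S : Matrix (Fin n) (Fin n) ℂ := Matrix.single j i (-(c : ℂ)) + Matrix.single i j (-(c : ℂ))
    with hS
  have eP : tP (cm (Eb (inl i) (inl j) h c) * M) = (τ + S) * bQ M := by
    rw [Matrix.add_mul, ← h1]
    ext a b
    simp only [tP, e, Matrix.add_apply, hS, Matrix.add_mul, Matrix.mul_apply, Matrix.single_apply,
      bQ, add_assoc]
    simp [ite_and, eq_comm]
  rw [Ff_eq (hM.act _) (τ + S) (by rw [eQ, eP]), h3, eQ, th_add_even, one_mul]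
  intro m
  refine ⟨- c * m i * m j, ?_⟩
  simp only [qf, hS, Matrix.add_apply, mul_add, Finset.sum_add_distrib, Matrix.single_apply]
  simp [ite_and]
  ring

lemma good_Pk (σ : Equiv.Perm (Fin n)) : Pk σ ∈ Good n := by
  refine ⟨((Equiv.Perm.sign σ : ℤ) : ℂ), by simp, fun M hM => ?_⟩
  obtain ⟨τ, h1, h2, h3⟩ := hM.tau
  have e : ∀ p a, (cm (Pk σ) * M) p a = M (Sum.map σ σ p) a := by
    intro p a
    rw [cm_mul_apply]
    simp [act_Pk, bv_apply]
  have eQ : bQ (cm (Pk σ) * M) = (bQ M).submatrix σ id := by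
    ext a b; simp [bQ, e]
  have eP : tP (cm (Pk σ) * M) = (τ.submatrix σ σ) * (bQ M).submatrix σ id := by
    rw [Matrix.submatrix_mul_equiv, ← h1]
    ext a b; simp [tP, e]
  rw [Ff_eq (hM.act _) (τ.submatrix σ σ) (by rw [eQ, eP]), h3, eQ, th_perm, Matrix.det_permute]
  have hd := hM.det
  rcases Int.units_eq_one_or (Equiv.Perm.sign σ) with hs | hs <;> rw [hs] <;> simp
  ring

lemma mul_J0 {k : ℕ} : Mlt (Jk (0 : Fin (k+1))) (-I) := by
  intro M hM
  obtain ⟨τ, h1, h2, h3⟩ := hM.tau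
  have el : ∀ i a, (cm (Jk (0 : Fin (k+1))) * M) (inl i) a
      = if i = 0 then - M (inr i) a else M (inl i) a := by
    intro i a
    rw [cm_mul_apply]
    simp only [act_Jk_inl, bv_apply]
    split_ifs <;> simp
  have er : ∀ i a, (cm (Jk (0 : Fin (k+1))) * M) (inr i) a
      = if i = 0 then M (inl i) a else M (inr i) a := by
    intro i a
    rw [cm_mul_apply]
    simp only [act_Jk_inr, bv_apply]
    split_ifs <;> simp
  have ht : τ 0 0 ≠ 0 := by
    intro h0; have := h2.t_im; rw [h0] at this; simp at this
  have hP : ∀ i a, M (inl i) a = τ i 0 * M (inr 0) a + ∑ j : Fin k, τ i j.succ * M (inr j.succ) a := by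
    intro i a
    have := congrFun (congrFun h1 i) a
    rw [Matrix.mul_apply, Fin.sum_univ_succ] at this
    exact this
  have eQ : bQ (cm (Jk (0 : Fin (k+1))) * M) = (bQ M).updateRow 0 (∑ j, τ 0 j • bQ M j) := by
    ext i a
    simp only [bQ, er, Matrix.updateRow_apply]
    split_ifs with h
    · subst h
      rw [hP, Finset.sum_apply, Fin.sum_univ_succ]; rfl
    · rfl
  have eD : (bQ (cm (Jk (0 : Fin (k+1))) * M)).det = τ 0 0 * (bQ M).det := by
    rw [eQ, Matrix.det_updateRow_sum]; rfl
  have eP : tP (cm (Jk (0 : Fin (k+1))) * M) = inv0 τ * bQ (cm (Jk (0 : Fin (k+1))) * M) := by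
    ext i a
    rw [Matrix.mul_apply, Fin.sum_univ_succ]
    simp only [tP, bQ, el, er, if_true, Fin.succ_ne_zero, if_false]
    refine Fin.cases ?_ (fun i => ?_) i
    · rw [if_pos rfl, hP 0 a]
      have : ∑ j : Fin k, inv0 τ 0 j.succ * M (inr j.succ) a
        = (∑ j : Fin k, τ 0 j.succ * M (inr j.succ) a) / τ 0 0 := by
        rw [Finset.sum_div]
        refine Finset.sum_congr rfl fun j _ => ?_
        simp [inv0]; ring
      rw [this, show inv0 τ 0 0 = -1 / τ 0 0 from rfl]
      field_simp
      ring
    · rw [if_neg (Fin.succ_ne_zero i), hP 0 a, hP i.succ a]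
      have : ∑ j : Fin k, inv0 τ i.succ j.succ * M (inr j.succ) a
        = (∑ j : Fin k, τ i.succ j.succ * M (inr j.succ) a) -
          τ i.succ 0 / τ 0 0 * (∑ j : Fin k, τ 0 j.succ * M (inr j.succ) a) := by
        rw [Finset.mul_sum, ← Finset.sum_sub_distrib]
        refine Finset.sum_congr rfl fun j _ => ?_
        simp [inv0]; ring
      rw [this, show inv0 τ i.succ 0 = τ i.succ 0 / τ 0 0 from rfl]
      field_simp
      ring
  have hH := (hM.act (Jk 0)).hs _ eP
  rw [Ff_eq (hM.act _) _ eP, h3, eD, th_inv0 h2 hH]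
  have hd := hM.det
  field_simp

lemma good_Jk {k : ℕ} (i : Fin (k+1)) : Jk i ∈ Good (k+1) := by
  have h0 : (Jk (0 : Fin (k+1))) ∈ Good (k+1) := ⟨-I, by simp, mul_J0⟩
  have h1 := Pk_mul_Jk (Equiv.swap 0 i) i
  rw [Equiv.swap_apply_right] at h1
  rw [eq_mul_inv_of_mul_eq h1.symm]
  exact (Good _).mul_mem ((Good _).mul_mem (good_Pk _) h0) ((Good _).inv_mem (good_Pk _))

lemma conj_Eb (X : Spq n) {p q p' q' : HypIdx n} (h h') (c : ℤ) (hp : act X (bv p) = bv p')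
    (hq : act X (bv q) = bv q') : X * Eb p q h c * X⁻¹ = Eb p' q' h' c := by
  rw [Eb, conj_E]
  exact E_congr hp (by rw [act_smul, hq]) _ _ _ _ _ _

lemma Jk_bv_self (k : Fin n) : act (Jk k) (bv (inl k)) = bv (inr k) := by
  ext p; rcases p with i | i
  · rw [act_Jk_inl]; simp [bv_apply]
  · rw [act_Jk_inr]; simp [bv_apply]

lemma Jk_bv_ne (k : Fin n) (r) (h : ix r ≠ k) : act (Jk k) (bv r) = bv r := by
  ext p; rcases p with i | i <;> rcases r with j | j <;> simp at h
  all_goals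
    first
    | rw [act_Jk_inl]
    | rw [act_Jk_inr]
    by_cases hi : i = k
    · subst hi; simp [bv_apply, Ne.symm h]
    · simp [hi]

lemma Good_conj {X A B : Spq n} (hX : X ∈ Good n) (hA : A ∈ Good n) (h : X * A * X⁻¹ = B) :
    B ∈ Good n := by
  rw [← h]
  exact (Good _).mul_mem ((Good _).mul_mem hX hA) ((Good _).inv_mem hX)

lemma good_Eb {k : ℕ} (p q : HypIdx (k+1)) (h) (c : ℤ) : Eb p q h c ∈ Good (k+1) := by
  have hlr : ∀ (i j : Fin (k+1)) (h), (Eb (inl i) (inr j) h c) ∈ Good (k+1) := by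
    intro i j h
    have hij : i ≠ j := by rintro rfl; exact h rfl
    exact Good_conj (good_Jk j) (good_Eb_ll i j (by simp) c)
      (conj_Eb _ _ _ _ (Jk_bv_ne _ _ hij) (Jk_bv_self _))
  rcases p with i | i <;> rcases q with j | j
  · exact good_Eb_ll i j h c
  · exact hlr i j h
  · have hij : j ≠ i := by rintro rfl; exact h rfl
    exact Good_conj (good_Jk i) (good_Eb_ll i j (by simp) c)
      (conj_Eb _ _ _ _ (Jk_bv_self _) (Jk_bv_ne _ _ hij))
  · by_cases hij : j = i
    · subst hij
      exact Good_conj (good_Jk j) (good_Eb_ll j j (by simp) c)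
        (conj_Eb _ _ _ _ (Jk_bv_self _) (Jk_bv_self _))
    · exact Good_conj (good_Jk i) (hlr i j (by simpa using hij))
        (conj_Eb _ _ _ _ (Jk_bv_self _) (Jk_bv_ne _ _ hij))

lemma good_all {k : ℕ} (A : Spq (k+1)) : ∃ c : ℂ, c ≠ 0 ∧ Mlt A c := by
  rw [← mem_Good]
  have : NS (Finset.univ : Finset (Fin (k+1))) ≤ Good (k+1) := by
    rw [NS, Subgroup.closure_le]
    rintro A (⟨p, q, h, c, -, -, rfl⟩ | ⟨i, -, rfl⟩)
    · exact good_Eb p q h c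
    · exact good_Jk i
  apply this
  rw [NS_univ]; trivial

/-- base frame -/
noncomputable def M0 : Matrix (HypIdx n) (Fin n) ℂ := fun p a =>
  Sum.elim (fun i => if i = a then I else 0) (fun i => if i = a then 1 else 0) p

lemma M0_XF : XF (M0 : Matrix (HypIdx n) (Fin n) ℂ) := by
  have e1 : ∀ z : Fin n → ℂ, ∀ i, (M0 *ᵥ z) (inl i) = I * z i := by
    intro z i; simp [mulVec, dotProduct, M0]
  have e2 : ∀ z : Fin n → ℂ, ∀ i, (M0 *ᵥ z) (inr i) = z i := by
    intro z i; simp [mulVec, dotProduct, M0]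
  constructor
  · intro z z'
    simp only [om, e1, e2]
    exact Finset.sum_eq_zero fun i _ => by ring
  · intro z hz
    simp only [e1, e2, im_sum]
    have : ∀ i, (star (z i) * (I * z i)).im = normSq (z i) := by
      intro i; simp [normSq_apply]
    simp only [this]
    obtain ⟨i, hi⟩ := Function.ne_iff.mp hz
    exact Finset.sum_pos' (fun i _ => normSq_nonneg _) ⟨i, Finset.mem_univ _, normSq_pos.mpr hi⟩

lemma F_M0 : Ff (M0 : Matrix (HypIdx n) (Fin n) ℂ) ≠ 0 := by
  rw [Ff_eq M0_XF ((I : ℂ) • (1 : Matrix (Fin n) (Fin n) ℂ))]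
  · exact div_ne_zero (pow_ne_zero _ th_I_ne) M0_XF.det
  · ext i a; simp [tP, bQ, M0]

lemma Mlt_unique {A : Spq n} {c d : ℂ} (h : Mlt A c) (h' : Mlt A d) : c = d := by
  have h1 := h _ M0_XF
  rw [h' _ M0_XF] at h1
  exact (mul_right_cancel₀ F_M0 h1).symm

noncomputable def chi {k : ℕ} : Spq (k+1) →* ℂˣ where
  toFun A := Units.mk0 (good_all A).choose (good_all A).choose_spec.1
  map_one' := by
    ext
    exact Mlt_unique (good_all 1).choose_spec.2
      (fun M _ => by rw [cm_one, Matrix.one_mul]; simp)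
  map_mul' A B := by
    ext
    refine Mlt_unique (good_all (A * B)).choose_spec.2 (fun M hM => ?_)
    rw [cm_mul, Matrix.mul_assoc, (good_all A).choose_spec.2 _ (hM.act B),
      (good_all B).choose_spec.2 _ hM, ← mul_assoc]
    simp

lemma chi_J {k : ℕ} : ((chi (Jk (0 : Fin (k+1))) : ℂˣ) : ℂ) = -I :=
  Mlt_unique (good_all (Jk 0)).choose_spec.2 mul_J0

lemma chi_order {k : ℕ} (m : ℤ) (h : (chi (Jk (0 : Fin (k+1))) : ℂˣ) ^ m = 1) : 4 ∣ m := by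
  have h1 : (-I : ℂ) ^ m = 1 := by
    rw [← chi_J (k := k), ← Units.val_zpow_eq_zpow_val, h, Units.val_one]
  have hI : (-I : ℂ) ≠ 0 := by simp
  have h4 : (-I : ℂ) ^ (4 : ℤ) = 1 := by
    rw [show (4 : ℤ) = ((4 : ℕ) : ℤ) from rfl, zpow_natCast, neg_pow, I_pow_four]; norm_num
  rw [← Int.emod_add_mul_ediv m 4, zpow_add₀ hI, _root_.zpow_mul, h4, _root_.one_zpow, mul_one] at h1
  have hr0 : 0 ≤ m % 4 := Int.emod_nonneg _ (by norm_num)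
  have hr4 : m % 4 < 4 := Int.emod_lt_of_pos _ (by norm_num)
  apply Int.dvd_of_emod_eq_zero
  generalize m % 4 = r at *
  interval_cases r
  · rfl
  · exfalso
    have := congrArg Complex.re h1
    simp at this
  · exfalso
    rw [show (2 : ℤ) = ((2 : ℕ) : ℤ) from rfl, zpow_natCast] at h1
    have := congrArg Complex.re h1
    norm_num [pow_two] at this
  · exfalso
    rw [show (3 : ℤ) = ((3 : ℕ) : ℤ) from rfl, zpow_natCast] at h1
    have := congrArg Complex.re h1
    norm_num [pow_succ] at this

end part7

/-- For every `g ≥ 5`, the block-inclusion homomorphism `Sp^q_{2g}(ℤ) → Sp^q_{2(g+1)}(ℤ)`,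
extending a matrix by the identity on one additional symplectic basis pair, induces an
isomorphism on abelianisations. -/
theorem Spq_stabilization_abelianization (g : ℕ) (hg : 5 ≤ g) :
    ∃ φ : ↥(Spq g) →* ↥(Spq (g + 1)),
      (∀ A : ↥(Spq g), (φ A).val.val = extendMat A.val.val) ∧
      Function.Bijective (Abelianization.map φ) := by
  exact ⟨phi, phi_val, final_aux (by omega) chi 0 (fun n hn => chi_order n hn)⟩
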